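/- arXiv:1805.09689 — 2 statements merged into one kernel-verified Lean document; each statement's English description precedes it below -/
import Mathlib

section
/- For every n ≥ 1 with n ≡ 0 (mod 4) or n ≡ 3 (mod 4), the thickness of the complete tripartite graph K_{2,n,n} equals ⌈(n+2)/4⌉. -/
open SimpleGraph

/-- A simple graph is planar if it admits a drawing in the plane: an injective
placement of vertices and, for each edge, an injective continuous arc joining
the images of its endpoints, such that arcs avoid vertex images in their
interiors and distinct arcs meet only at vertex images. -/
def IsPlanar {V : Type*} (G : SimpleGraph V) : Prop :=
  ∃ (f : V → ℝ × ℝ) (γ : G.edgeSet → (Set.Icc (0:ℝ) 1 → ℝ × ℝ)),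
    Function.Injective f ∧
    (∀ e : G.edgeSet, Continuous (γ e)) ∧
    (∀ e : G.edgeSet, ∃ u v : V, (e : Sym2 V) = s(u, v) ∧
      γ e ⟨0, by norm_num⟩ = f u ∧ γ e ⟨1, by norm_num⟩ = f v) ∧
    (∀ e : G.edgeSet, Function.Injective (γ e)) ∧
    (∀ e : G.edgeSet, ∀ t : Set.Icc (0:ℝ) 1, (t : ℝ) ≠ 0 → (t : ℝ) ≠ 1 →
      ∀ v : V, γ e t ≠ f v) ∧
    (∀ e e' : G.edgeSet, e ≠ e' → ∀ s t : Set.Icc (0:ℝ) 1,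
      γ e s = γ e' t → γ e s ∈ Set.range f)

/-- The thickness of a graph: the least `n` such that `G` is the union of `n`
planar subgraphs. -/
noncomputable def thickness {V : Type*} (G : SimpleGraph V) : ℕ :=
  sInf {n : ℕ | ∃ H : Fin n → SimpleGraph V,
    (∀ i, H i ≤ G) ∧ (∀ i, IsPlanar (H i)) ∧ (⨆ i, H i) = G}


/-- cycle space -/
def cycZ (n : ℕ) (E : Finset (Fin n × Fin n)) : Submodule (ZMod 2) (Fin n × Fin n → ZMod 2) where
  carrier := {z | (∀ e, e ∉ E → z e = 0) ∧ (∀ i, ∑ j, z (i, j) = 0) ∧ (∀ j, ∑ i, z (i, j) = 0)}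
  add_mem' := by
    rintro x y ⟨h1, h2, h3⟩ ⟨k1, k2, k3⟩
    refine ⟨fun e he => by simp [h1 e he, k1 e he], fun i => ?_, fun j => ?_⟩
    · simp [Finset.sum_add_distrib, h2, k2]
    · simp [Finset.sum_add_distrib, h3, k3]
  zero_mem' := by simp
  smul_mem' := by
    rintro c x ⟨h1, h2, h3⟩
    refine ⟨fun e he => by simp [h1 e he], fun i => ?_, fun j => ?_⟩
    · simp [← Finset.mul_sum, h2]
    · simp [← Finset.mul_sum, h3]

lemma cycZ_dim (m : ℕ) (E : Finset (Fin (m+1) × Fin (m+1))) :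
    E.card ≤ Module.finrank (ZMod 2) (cycZ (m+1) E) + (2 * m + 1) := by
  classical
  let ext : (E → ZMod 2) →ₗ[ZMod 2] (Fin (m+1) × Fin (m+1) → ZMod 2) :=
    { toFun := fun x e => if h : e ∈ E then x ⟨e, h⟩ else 0
      map_add' := by intro x y; ext e; by_cases h : e ∈ E <;> simp [h]
      map_smul' := by intro c x; ext e; by_cases h : e ∈ E <;> simp [h] }
  let T : (Fin (m+1) × Fin (m+1) → ZMod 2) →ₗ[ZMod 2] (Fin (m+1) → ZMod 2) × (Fin m → ZMod 2) :=
    { toFun := fun z => (fun i => ∑ j, z (i, j), fun j => ∑ i, z (i, j.castSucc))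
      map_add' := by intro x y; ext <;> simp [Finset.sum_add_distrib]
      map_smul' := by intro c x; ext <;> simp [Finset.mul_sum] }
  have hrn := LinearMap.finrank_range_add_finrank_ker (T ∘ₗ ext)
  have h1 : Module.finrank (ZMod 2) (LinearMap.range (T ∘ₗ ext)) ≤ 2 * m + 1 := by
    refine (Submodule.finrank_le _).trans ?_
    simp; omega
  have hinj : Function.Injective ext := by
    intro x y hxy
    ext ⟨e, he⟩
    have := congrFun hxy e
    simpa [ext, he] using this
  have h2 : Module.finrank (ZMod 2) (LinearMap.ker (T ∘ₗ ext)) ≤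
      Module.finrank (ZMod 2) (cycZ (m+1) E) := by
    have hmem : ∀ x : LinearMap.ker (T ∘ₗ ext), ext x.1 ∈ cycZ (m+1) E := by
      rintro ⟨x, hx⟩
      have hx' : T (ext x) = 0 := hx
      have hr : ∀ i, ∑ j, ext x (i, j) = 0 := fun i => congrFun (congrArg Prod.fst hx') i
      have hc : ∀ j : Fin m, ∑ i, ext x (i, j.castSucc) = 0 :=
        fun j => congrFun (congrArg Prod.snd hx') j
      refine ⟨fun e he => by simp [ext, he], hr, fun j => ?_⟩
      induction j using Fin.lastCases with
      | cast j => exact hc j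
      | last =>
        have : ∑ j, ∑ i, ext x (i, j) = 0 := by
          rw [Finset.sum_comm]; exact Finset.sum_eq_zero (fun i _ => hr i)
        rw [Fin.sum_univ_castSucc] at this
        simpa [hc] using this
    let F : LinearMap.ker (T ∘ₗ ext) →ₗ[ZMod 2] cycZ (m+1) E :=
      LinearMap.codRestrict _ (ext ∘ₗ Submodule.subtype _) hmem
    refine LinearMap.finrank_le_finrank_of_injective (f := F) ?_
    intro x y hxy
    apply Subtype.ext
    apply hinj
    exact congrArg Subtype.val hxy
  simp at hrn
  omega

lemma cyc_card {n : ℕ} {E : Finset (Fin n × Fin n)} {z : Fin n × Fin n → ZMod 2}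
    (hz : z ∈ cycZ n E) (h0 : z ≠ 0) : 4 ≤ (E.filter (fun e => z e ≠ 0)).card := by
  classical
  obtain ⟨h1, h2, h3⟩ := hz
  have row : ∀ i j, z (i, j) ≠ 0 → ∃ j', j' ≠ j ∧ z (i, j') ≠ 0 := by
    intro i j h
    by_contra! hc
    exact h (by rw [← h2 i, Finset.sum_eq_single j] <;> simp +contextual [hc])
  have col : ∀ i j, z (i, j) ≠ 0 → ∃ i', i' ≠ i ∧ z (i', j) ≠ 0 := by
    intro i j h
    by_contra! hc
    exact h (by rw [← h3 j, Finset.sum_eq_single i] <;> simp +contextual [hc])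
  obtain ⟨⟨i, j⟩, hij⟩ := Function.ne_iff.mp h0
  obtain ⟨j', hj', hij'⟩ := row i j hij
  obtain ⟨i', hi', hi'j⟩ := col i j hij
  obtain ⟨i'', hi'', hi''j⟩ := col i j' hij'
  have hE : ∀ e, z e ≠ 0 → e ∈ E := fun e he => by_contra fun h => he (h1 e h)
  have : ({(i,j),(i,j'),(i',j),(i'',j')} : Finset (Fin n × Fin n)) ⊆ E.filter (fun e => z e ≠ 0) := by
    intro e he
    simp only [Finset.mem_insert, Finset.mem_singleton] at he
    rw [Finset.mem_filter]
    have : z e ≠ 0 := by rcases he with rfl|rfl|rfl|rfl <;> assumption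
    exact ⟨hE e this, this⟩
  refine le_trans ?_ (Finset.card_le_card this)
  rw [Finset.card_insert_of_notMem, Finset.card_insert_of_notMem, Finset.card_insert_of_notMem,
    Finset.card_singleton]
  all_goals
    simp only [Finset.mem_insert, Finset.mem_singleton, Prod.mk.injEq]
    tauto

lemma euler_fin {n : ℕ} (hn : 2 ≤ n) (E : Finset (Fin n × Fin n)) {ι : Type} [Fintype ι]
    [DecidableEq ι]
    (a b : Fin n × Fin n → ι)
    (h1 : ∀ ψ : ι → ZMod 2, (fun e => if e ∈ E then ψ (a e) + ψ (b e) else 0) ∈ cycZ n E)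
    (h2 : ∀ z ∈ cycZ n E, ∃ ψ : ι → ZMod 2, ∀ e ∈ E, z e = ψ (a e) + ψ (b e)) :
    E.card ≤ 4 * n - 4 := by
  classical
  let F : ι → (Fin n × Fin n → ZMod 2) := fun C e =>
    if e ∈ E then (Pi.single C 1 : ι → ZMod 2) (a e) + (Pi.single C 1 : ι → ZMod 2) (b e) else 0
  have hF : ∀ C, F C ∈ cycZ n E := fun C => h1 _
  let I : Finset ι := Finset.univ.filter (fun C => F C ≠ 0)
  have hsumψ : ∀ ψ : ι → ZMod 2, ∀ e ∈ E, ∑ C, ψ C * F C e = ψ (a e) + ψ (b e) := by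
    intro ψ e he
    simp [F, he, Pi.single_apply, mul_add, Finset.sum_add_distrib]
  have hcount : 4 * I.card ≤ 2 * E.card := by
    have hA : ∑ C ∈ I, 4 ≤ ∑ C ∈ I, (E.filter (fun e => F C e ≠ 0)).card :=
      Finset.sum_le_sum fun C hC => cyc_card (hF C) (Finset.mem_filter.mp hC).2
    have hB : ∑ C ∈ I, (E.filter (fun e => F C e ≠ 0)).card =
        ∑ e ∈ E, (I.filter (fun C => F C e ≠ 0)).card := by
      simp only [Finset.card_filter]
      exact Finset.sum_comm
    have hC : ∑ e ∈ E, (I.filter (fun C => F C e ≠ 0)).card ≤ ∑ e ∈ E, 2 := by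
      refine Finset.sum_le_sum fun e he => ?_
      refine (Finset.card_le_card (t := {a e, b e}) ?_).trans Finset.card_le_two
      intro C hC
      rw [Finset.mem_filter] at hC
      by_contra hcon
      simp only [Finset.mem_insert, Finset.mem_singleton, not_or] at hcon
      apply hC.2
      simp [F, he, Pi.single_apply, Ne.symm hcon.1, Ne.symm hcon.2]
    simp only [Finset.sum_const, smul_eq_mul] at hA hC
    omega
  obtain ⟨m, rfl⟩ : ∃ m, n = m + 1 := ⟨n - 1, by omega⟩
  have hdim := cycZ_dim m E
  have key : ∀ J : Finset ι, (∀ z ∈ cycZ (m+1) E, ∃ ψ : ι → ZMod 2, z = ∑ C ∈ J, ψ C • F C) →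
      Module.finrank (ZMod 2) (cycZ (m+1) E) ≤ J.card := by
    intro J hJ
    have hle : cycZ (m+1) E ≤ Submodule.span (ZMod 2) ((J.image F : Finset _) : Set _) := by
      intro z hz
      obtain ⟨ψ, rfl⟩ := hJ z hz
      refine Submodule.sum_mem _ fun C hC => Submodule.smul_mem _ _ (Submodule.subset_span ?_)
      simpa using ⟨C, hC, rfl⟩
    exact (Submodule.finrank_mono hle).trans
      ((finrank_span_finset_le_card _).trans Finset.card_image_le)
  have hz0 : ∀ z ∈ cycZ (m+1) E, ∃ ψ : ι → ZMod 2, z = ∑ C, ψ C • F C := by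
    intro z hz
    obtain ⟨ψ, hψ⟩ := h2 z hz
    refine ⟨ψ, ?_⟩
    ext e
    by_cases he : e ∈ E
    · simp [hψ e he, hsumψ ψ e he]
    · simp [hz.1 e he, F, he]
  have hz1 : ∀ z ∈ cycZ (m+1) E, ∃ ψ : ι → ZMod 2, z = ∑ C ∈ I, ψ C • F C := by
    intro z hz
    obtain ⟨ψ, hψ⟩ := hz0 z hz
    refine ⟨ψ, ?_⟩
    rw [hψ]
    symm
    apply Finset.sum_subset (Finset.subset_univ _)
    intro C _ hC
    have : F C = 0 := by simpa [I] using hC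
    simp [this]
  have hone : ∑ C ∈ I, F C = 0 := by
    have : ∑ C, F C = 0 := by
      ext e
      by_cases he : e ∈ E
      · have := hsumψ (fun _ => 1) e he
        simp only [one_mul] at this
        simp [this]; decide
      · simp [F, he]
    rw [← this]
    apply Finset.sum_subset (Finset.subset_univ _)
    intro C _ hC
    simpa [I] using hC
  rcases I.eq_empty_or_nonempty with hI | ⟨C0, hC0⟩
  · have := key I hz1
    rw [hI, Finset.card_empty] at this
    omega
  · have := key (I.erase C0) (by
      intro z hz
      obtain ⟨ψ, hψ⟩ := hz1 z hz
      refine ⟨fun C => ψ C - ψ C0, ?_⟩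
      have e1 : z = ∑ C ∈ I, (ψ C - ψ C0) • F C := by
        simp only [sub_smul, Finset.sum_sub_distrib, ← Finset.smul_sum, hone, smul_zero, sub_zero]
        exact hψ
      rw [e1, ← Finset.add_sum_erase _ _ hC0]
      simp)
    rw [Finset.card_erase_of_mem hC0] at this
    have : 0 < I.card := Finset.card_pos.mpr ⟨C0, hC0⟩
    omega

lemma euler_any {n : ℕ} (hn : 2 ≤ n) (E : Finset (Fin n × Fin n)) {ι : Type}
    (a b : Fin n × Fin n → ι)
    (h1 : ∀ ψ : ι → ZMod 2, (fun e => if e ∈ E then ψ (a e) + ψ (b e) else 0) ∈ cycZ n E)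
    (h2 : ∀ z ∈ cycZ n E, ∃ ψ : ι → ZMod 2, ∀ e ∈ E, z e = ψ (a e) + ψ (b e)) :
    E.card ≤ 4 * n - 4 := by
  classical
  let S : Finset ι := Finset.univ.image a ∪ Finset.univ.image b
  refine euler_fin hn E (ι := S) (fun e => ⟨a e, by simp [S]⟩) (fun e => ⟨b e, by simp [S]⟩) ?_ ?_
  · intro ψ
    convert h1 (fun x => if h : x ∈ S then ψ ⟨x, h⟩ else 0) using 4
    · rw [dif_pos]
    · rw [dif_pos]
  · intro z hz
    obtain ⟨ψ, h⟩ := h2 z hz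
    exact ⟨fun x => ψ x, h⟩

abbrev GE := (ℤ × ℤ) × Bool

def gsrc (x : GE) : ℤ × ℤ := x.1
def gtgt (x : GE) : ℤ × ℤ := if x.2 then (x.1.1, x.1.2 + 1) else (x.1.1 + 1, x.1.2)
def gface (x : GE) : ℤ × ℤ := if x.2 then (x.1.1 - 1, x.1.2) else (x.1.1, x.1.2 - 1)
def ga (p q : ℤ × ℤ) : Prop := ∃ x : GE, (gsrc x = p ∧ gtgt x = q) ∨ (gsrc x = q ∧ gtgt x = p)

lemma ga_symm {p q : ℤ × ℤ} (h : ga p q) : ga q p := by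
  obtain ⟨x, h⟩ := h
  exact ⟨x, h.symm⟩

noncomputable def bd : (GE →₀ ZMod 2) →ₗ[ZMod 2] (ℤ × ℤ →₀ ZMod 2) :=
  Finsupp.linearCombination (ZMod 2)
    (fun x => Finsupp.single (gsrc x) 1 + Finsupp.single (gtgt x) 1)

lemma bd_single (x : GE) (a : ZMod 2) : bd (Finsupp.single x a) =
    a • (Finsupp.single (gsrc x) 1 + Finsupp.single (gtgt x) 1) := by
  simp [bd, Finsupp.linearCombination_single]

lemma bd_apply (c : GE →₀ ZMod 2) (i j : ℤ) :
    bd c (i, j) = c ((i, j), false) + c ((i, j), true) + c ((i - 1, j), false)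
      + c ((i, j - 1), true) := by
  induction c using Finsupp.induction_linear with
  | zero => simp
  | add f g hf hg => rw [map_add, Finsupp.add_apply, hf, hg]; simp only [Finsupp.add_apply]; ring
  | single x a =>
    rw [bd_single]
    obtain ⟨⟨k, l⟩, b⟩ := x
    have e1 : (k + 1 = i) ↔ (k = i - 1) := by omega
    have e2 : (l + 1 = j) ↔ (l = j - 1) := by omega
    cases b <;>
      simp [gsrc, gtgt, Finsupp.single_apply, e1, e2]

lemma grid_exact (c : GE →₀ ZMod 2) (hc : bd c = 0) :
    ∃ φ : ℤ × ℤ → ZMod 2, ∀ x, c x = φ x.1 + φ (gface x) := by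
  classical
  have two : (2 : ZMod 2) = 0 := rfl
  obtain ⟨M, hM⟩ : ∃ M : ℤ, ∀ i j b, j < M → c ((i, j), b) = 0 := by
    obtain ⟨M, hM⟩ := (c.support.image (fun x => x.1.2)).bddBelow
    refine ⟨M, fun i j b hj => ?_⟩
    by_contra h
    have : M ≤ j := hM (by
      simp only [Finset.coe_image, Set.mem_image, Finset.mem_coe, Finsupp.mem_support_iff]
      exact ⟨((i, j), b), h, rfl⟩)
    omega
  let φ : ℤ × ℤ → ZMod 2 := fun p =>
    ∑ t ∈ Finset.range (p.2 - M + 1).toNat, c ((p.1, M + t), false)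
  have hφ : ∀ i j, φ (i, j) = φ (i, j - 1) + c ((i, j), false) := by
    intro i j
    by_cases hj : M ≤ j
    · have e : (j - M + 1).toNat = (j - 1 - M + 1).toNat + 1 := by omega
      have e2 : M + ((j - 1 - M + 1).toNat : ℤ) = j := by omega
      simp only [φ]
      rw [e, Finset.sum_range_succ, e2]
    · have e : (j - M + 1).toNat = 0 := by omega
      have e2 : (j - 1 - M + 1).toNat = 0 := by omega
      simp only [φ]
      rw [e, e2, hM i j _ (by omega)]
      simp
  have hlow : ∀ i j, j < M → φ (i, j) = 0 := by
    intro i j hj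
    have e : (j - M + 1).toNat = 0 := by omega
    simp only [φ]
    rw [e]; simp
  have hv : ∀ i (k : ℕ), c ((i, M - 1 + k), true) = φ (i, M - 1 + k) + φ (i - 1, M - 1 + k) := by
    intro i k
    induction k with
    | zero =>
      rw [hM _ _ _ (by simp), hlow _ _ (by simp), hlow _ _ (by simp)]; simp
    | succ k ih =>
      have h0 := bd_apply c i (M - 1 + (k + 1 : ℕ))
      rw [hc, Finsupp.zero_apply] at h0
      rw [hφ i, hφ (i - 1)]
      have e : M - 1 + ((k + 1 : ℕ) : ℤ) - 1 = M - 1 + k := by push_cast; ring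
      rw [e] at h0 ⊢
      rw [ih] at h0
      linear_combination h0 + (c ((i, M - 1 + (k + 1 : ℕ)), true)) * two
  refine ⟨φ, ?_⟩
  rintro ⟨⟨i, j⟩, b⟩
  cases b
  · simp only [gface]
    have := hφ i j
    simp only [Bool.false_eq_true, if_false]
    linear_combination (-1 : ZMod 2) * this - φ (i, j-1) * two
  · simp only [gface, if_true]
    by_cases hj : M ≤ j
    · have := hv i (j - M + 1).toNat
      rwa [show M - 1 + ((j - M + 1).toNat : ℤ) = j by omega] at this
    · rw [hM _ _ _ (by omega), hlow _ _ (by omega), hlow _ _ (by omega)]; simp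

lemma row_sum {n : ℕ} (E : Finset (Fin n × Fin n)) (F : Fin n × Fin n → ZMod 2) (i : Fin n) :
    ∑ e ∈ E, F e * (if e.1 = i then 1 else 0) = ∑ j, if (i, j) ∈ E then F (i, j) else 0 := by
  have h : ∑ e ∈ E, F e * (if e.1 = i then 1 else 0) =
      ∑ e, if e ∈ E then F e * (if e.1 = i then 1 else 0) else 0 := by
    simp [Finset.sum_ite_mem]
  rw [h, Fintype.sum_prod_type, Finset.sum_eq_single i]
  · simp
  · intro k _ hk; simp [hk]
  · simp

lemma col_sum {n : ℕ} (E : Finset (Fin n × Fin n)) (F : Fin n × Fin n → ZMod 2) (j : Fin n) :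
    ∑ e ∈ E, F e * (if e.2 = j then 1 else 0) = ∑ i, if (i, j) ∈ E then F (i, j) else 0 := by
  have h : ∑ e ∈ E, F e * (if e.2 = j then 1 else 0) =
      ∑ e, if e ∈ E then F e * (if e.2 = j then 1 else 0) else 0 := by
    simp [Finset.sum_ite_mem]
  rw [h, Fintype.sum_prod_type_right, Finset.sum_eq_single j]
  · simp
  · intro k _ hk; simp [hk]
  · simp

lemma minor_bound {n : ℕ} (hn : 2 ≤ n) (E : Finset (Fin n × Fin n))
    (B : Fin n ⊕ Fin n → Set (ℤ × ℤ)) (hfin : ∀ u, (B u).Finite) (hne : ∀ u, (B u).Nonempty)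
    (hdis : ∀ u v p, p ∈ B u → p ∈ B v → u = v)
    (hcon : ∀ u, ∀ p ∈ B u, ∀ q ∈ B u,
      Relation.ReflTransGen (fun x y => ga x y ∧ x ∈ B u ∧ y ∈ B u) p q)
    (hE : ∀ e ∈ E, ∃ p ∈ B (Sum.inl e.1), ∃ q ∈ B (Sum.inr e.2), ga p q) :
    E.card ≤ 4 * n - 4 := by
  classical
  have two : (2 : ZMod 2) = 0 := rfl
  have hg : ∀ e : Fin n × Fin n, ∃ x : GE, e ∈ E →
      ((gsrc x ∈ B (Sum.inl e.1) ∧ gtgt x ∈ B (Sum.inr e.2)) ∨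
       (gsrc x ∈ B (Sum.inr e.2) ∧ gtgt x ∈ B (Sum.inl e.1))) := by
    intro e
    by_cases he : e ∈ E
    · obtain ⟨p, hp, q, hq, x, hx⟩ := hE e he
      refine ⟨x, fun _ => ?_⟩
      rcases hx with ⟨rfl, rfl⟩ | ⟨rfl, rfl⟩
      · exact Or.inl ⟨hp, hq⟩
      · exact Or.inr ⟨hq, hp⟩
    · exact ⟨((0, 0), false), fun h => absurd h he⟩
  choose g hg using hg
  have ginj : ∀ e ∈ E, ∀ e' ∈ E, g e = g e' → e = e' := by
    intro e he e' he' h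
    have h1 := hg e he
    have h2 := hg e' he'
    rw [h] at h1
    rcases h1 with ⟨a1, a2⟩ | ⟨a1, a2⟩ <;> rcases h2 with ⟨b1, b2⟩ | ⟨b1, b2⟩
    · exact Prod.ext (Sum.inl.inj (hdis _ _ _ a1 b1)) (Sum.inr.inj (hdis _ _ _ a2 b2))
    · exact absurd (hdis _ _ _ a1 b1) (by simp)
    · exact absurd (hdis _ _ _ a1 b1) (by simp)
    · exact Prod.ext (Sum.inl.inj (hdis _ _ _ a2 b2)) (Sum.inr.inj (hdis _ _ _ a1 b1))
  let inn : GE → Prop := fun x => ∃ u, gsrc x ∈ B u ∧ gtgt x ∈ B u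
  have gninn : ∀ e ∈ E, ¬ inn (g e) := by
    rintro e he ⟨u, h1, h2⟩
    rcases hg e he with ⟨a1, a2⟩ | ⟨a1, a2⟩
    · exact absurd ((hdis _ _ _ h1 a1).symm.trans (hdis _ _ _ h2 a2)) (by simp)
    · exact absurd ((hdis _ _ _ h1 a1).symm.trans (hdis _ _ _ h2 a2)) (by simp)
  let H : GE → Prop := fun x => inn x ∨ ∃ e ∈ E, x = g e
  have Hfin : {x | H x}.Finite := by
    have : {x | H x} ⊆ ((⋃ u, B u) ×ˢ (Set.univ : Set Bool)) ∪ (g '' (E : Set _)) := by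
      rintro x (⟨u, h1, h2⟩ | ⟨e, he, rfl⟩)
      · left
        exact ⟨Set.mem_iUnion.mpr ⟨u, h1⟩, Set.mem_univ _⟩
      · right
        exact ⟨e, he, rfl⟩
    refine Set.Finite.subset ?_ this
    exact ((Set.finite_iUnion hfin).prod Set.finite_univ).union (E.finite_toSet.image g)
  let r : ℤ × ℤ → ℤ × ℤ → Prop := fun p q => ∃ x, ¬ H x ∧ p = x.1 ∧ q = gface x
  refine euler_any hn E (ι := Quot r) (fun e => Quot.mk r (g e).1)
    (fun e => Quot.mk r (gface (g e))) ?_ ?_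
  · intro ψ
    let φ : ℤ × ℤ → ZMod 2 := fun p => ψ (Quot.mk r p)
    have h0 : ∀ x, ¬ H x → φ x.1 + φ (gface x) = 0 := by
      intro x hx
      have : φ x.1 = φ (gface x) := congrArg ψ (Quot.sound ⟨x, hx, rfl, rfl⟩)
      rw [this]
      linear_combination φ (gface x) * two
    let c : GE →₀ ZMod 2 := Finsupp.onFinset Hfin.toFinset (fun x => φ x.1 + φ (gface x)) (by
      intro x hx
      by_contra h
      exact hx (h0 x (by simpa using h)))
    have hcx : ∀ x, c x = φ x.1 + φ (gface x) := fun x => rfl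
    have hbd : bd c = 0 := by
      ext ⟨i, j⟩
      rw [bd_apply]
      simp only [hcx, gface, if_true, Bool.false_eq_true, if_false, Finsupp.zero_apply]
      linear_combination (φ (i, j) + φ (i, j-1) + φ (i-1, j) + φ (i-1, j-1)) * two
    have hL : ∀ u, ∑ e ∈ E, c (g e) *
        ((if Sum.inl e.1 = u then 1 else 0) + (if Sum.inr e.2 = u then 1 else 0)) = 0 := by
      intro u
      let χ : ℤ × ℤ → ZMod 2 := fun p => if p ∈ B u then 1 else 0
      have hχ : ∀ p v, p ∈ B v → χ p = if v = u then 1 else 0 := by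
        intro p v hp
        by_cases hv : v = u
        · subst hv; simp [χ, hp]
        · have : p ∉ B u := fun h => hv (hdis _ _ _ hp h)
          simp [χ, hv, this]
      let L : (ℤ × ℤ →₀ ZMod 2) →ₗ[ZMod 2] ZMod 2 := Finsupp.linearCombination (ZMod 2) χ
      have hLb : ∀ d : GE →₀ ZMod 2, L (bd d) = d.sum (fun x a => a * (χ (gsrc x) + χ (gtgt x))) := by
        intro d
        have : L ∘ₗ bd = Finsupp.linearCombination (ZMod 2)
            (fun x => χ (gsrc x) + χ (gtgt x)) := by
          ext x
          simp [L, bd_single]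
        have h := congrArg (fun f => f d) this
        simp only [LinearMap.comp_apply] at h
        rw [h, Finsupp.linearCombination_apply]
        rfl
      have h1 := hLb c
      rw [hbd, map_zero] at h1
      have h2 : c.sum (fun x a => a * (χ (gsrc x) + χ (gtgt x))) =
          ∑ x ∈ E.image g, c x * (χ (gsrc x) + χ (gtgt x)) := by
        have hs1 : c.sum (fun x a => a * (χ (gsrc x) + χ (gtgt x))) =
          ∑ x ∈ c.support ∪ E.image g, c x * (χ (gsrc x) + χ (gtgt x)) :=
          Finsupp.sum_of_support_subset _ Finset.subset_union_left _ (by simp)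
        rw [hs1]
        symm
        apply Finset.sum_subset Finset.subset_union_right
        intro x _ hx
        by_cases hH : H x
        · rcases hH with ⟨v, a1, a2⟩ | ⟨e, he, rfl⟩
          · rw [hχ _ v a1, hχ _ v a2]
            linear_combination (c x * (if v = u then 1 else 0)) * two
          · exact absurd (Finset.mem_image_of_mem g he) hx
        · rw [hcx, h0 x hH, zero_mul]
      rw [h2, Finset.sum_image (fun e he e' he' h => ginj e he e' he' h)] at h1
      refine Eq.trans ?_ h1.symm
      refine Finset.sum_congr rfl fun e he => ?_
      rcases hg e he with ⟨a1, a2⟩ | ⟨a1, a2⟩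
      · rw [hχ _ _ a1, hχ _ _ a2]
      · rw [hχ _ _ a1, hχ _ _ a2, add_comm]
    refine ⟨fun e he => by simp [he], fun i => ?_, fun j => ?_⟩
    · have h := hL (Sum.inl i)
      simp only [Sum.inl.injEq, reduceCtorEq, if_false, add_zero] at h
      rw [row_sum] at h
      exact h
    · have h := hL (Sum.inr j)
      simp only [Sum.inr.injEq, reduceCtorEq, if_false, zero_add] at h
      rw [col_sum] at h
      exact h
  · intro z hz
    choose rt hrt using hne
    let M : Submodule (ZMod 2) (GE →₀ ZMod 2) :=
      Submodule.span (ZMod 2) {d | ∃ x, inn x ∧ d = Finsupp.single x 1}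
    let N := M.map bd
    have hstep : ∀ x, inn x → (Finsupp.single (gsrc x) 1 + Finsupp.single (gtgt x) 1 :
        ℤ × ℤ →₀ ZMod 2) ∈ N := by
      intro x hx
      refine ⟨Finsupp.single x 1, Submodule.subset_span ⟨x, hx, rfl⟩, ?_⟩
      rw [bd_single, one_smul]
    have hself : ∀ d : ℤ × ℤ →₀ ZMod 2, d + d = 0 := by
      intro d; ext p
      simp only [Finsupp.add_apply, Finsupp.zero_apply]
      linear_combination d p * two
    have hN : ∀ u, ∀ p ∈ B u, ∀ q ∈ B u,
        (Finsupp.single p 1 + Finsupp.single q 1 : ℤ × ℤ →₀ ZMod 2) ∈ N := by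
      intro u p hp q hq
      have := hcon u p hp q hq
      clear hq
      induction this with
      | refl => rw [hself]; exact N.zero_mem
      | @tail y w _ hbc ih =>
        have h1 : (Finsupp.single y 1 + Finsupp.single w 1 : ℤ × ℤ →₀ ZMod 2) ∈ N := by
          obtain ⟨⟨x, hx⟩, hy, hw⟩ := hbc
          rcases hx with ⟨rfl, rfl⟩ | ⟨rfl, rfl⟩
          · exact hstep x ⟨u, hy, hw⟩
          · rw [add_comm]; exact hstep x ⟨u, hw, hy⟩
        have h2 := N.add_mem ih h1
        have e : (Finsupp.single p 1 + Finsupp.single w 1 : ℤ × ℤ →₀ ZMod 2) =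
            (Finsupp.single p 1 + Finsupp.single y 1) +
              (Finsupp.single y 1 + Finsupp.single w 1) := by
          rw [add_assoc, ← add_assoc (Finsupp.single y 1), hself, zero_add]
        rw [e]; exact h2
    let c0 : GE →₀ ZMod 2 := ∑ e ∈ E, Finsupp.single (g e) (z e)
    have hc0 : bd c0 ∈ N := by
      have e1 : bd c0 = ∑ e ∈ E, z e •
          ((Finsupp.single (gsrc (g e)) 1 + Finsupp.single (gtgt (g e)) 1) : ℤ × ℤ →₀ ZMod 2) := by
        simp only [c0, map_sum, bd_single]
      have e2 : ∑ e ∈ E, z e •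
          ((Finsupp.single (rt (Sum.inl e.1)) 1 + Finsupp.single (rt (Sum.inr e.2)) 1) :
            ℤ × ℤ →₀ ZMod 2) = 0 := by
        rw [Finset.sum_subset (Finset.subset_univ E)
          (by intro e _ he; rw [hz.1 e he, zero_smul])]
        simp only [smul_add, Finset.sum_add_distrib, Fintype.sum_prod_type]
        rw [Finset.sum_eq_zero, Finset.sum_comm, Finset.sum_eq_zero, add_zero]
        · intro j _
          rw [← Finset.sum_smul, hz.2.2 j, zero_smul]
        · intro i _
          rw [← Finset.sum_smul, hz.2.1 i, zero_smul]
      rw [e1, ← add_zero (∑ e ∈ E, _), ← e2, ← Finset.sum_add_distrib]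
      refine N.sum_mem fun e he => ?_
      rw [← smul_add]
      refine N.smul_mem _ ?_
      rcases hg e he with ⟨a1, a2⟩ | ⟨a1, a2⟩
      · have := N.add_mem (hN _ _ a1 _ (hrt _)) (hN _ _ a2 _ (hrt _))
        convert this using 1
        abel
      · have := N.add_mem (hN _ _ a1 _ (hrt _)) (hN _ _ a2 _ (hrt _))
        convert this using 1
        abel
    obtain ⟨m, hm, hbm⟩ := hc0
    have hm0 : ∀ x, ¬ inn x → m x = 0 := by
      intro x hx
      clear hbm
      induction hm using Submodule.span_induction with
      | mem d hd =>
        obtain ⟨y, hy, rfl⟩ := hd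
        rw [Finsupp.single_apply, if_neg]
        rintro rfl; exact hx hy
      | zero => rfl
      | add d d' _ _ h1 h2 => rw [Finsupp.add_apply, h1, h2, add_zero]
      | smul a d _ h => rw [Finsupp.smul_apply, h, smul_zero]
    have hc0g : ∀ e ∈ E, c0 (g e) = z e := by
      intro e he
      simp only [c0, Finsupp.finsetSum_apply]
      rw [Finset.sum_eq_single e]
      · simp
      · intro e' he' hne
        rw [Finsupp.single_apply, if_neg]
        exact fun h => hne (ginj _ he' _ he h)
      · exact fun h => absurd he h
    have hc00 : ∀ x, ¬ H x → c0 x = 0 := by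
      intro x hx
      simp only [c0, Finsupp.finsetSum_apply]
      refine Finset.sum_eq_zero fun e he => ?_
      rw [Finsupp.single_apply, if_neg]
      rintro rfl
      exact hx (Or.inr ⟨e, he, rfl⟩)
    obtain ⟨φ, hφ⟩ := grid_exact (c0 + m) (by rw [map_add, hbm, hself])
    refine ⟨Quot.lift φ ?_, ?_⟩
    · rintro _ _ ⟨x, hx, rfl, rfl⟩
      have := hφ x
      rw [Finsupp.add_apply, hc00 x hx, hm0 x (fun h => hx (Or.inl h)), add_zero] at this
      linear_combination (-1 : ZMod 2) * this - φ (gface x) * two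
    · intro e he
      have := hφ (g e)
      rw [Finsupp.add_apply, hc0g e he, hm0 _ (gninn e he), add_zero] at this
      exact this

def near (N : ℕ) (x : ℝ × ℝ) (p : ℤ × ℤ) : Prop :=
  |(N : ℝ) * x.1 - p.1| < 1 ∧ |(N : ℝ) * x.2 - p.2| < 1

def LatS (N : ℕ) (K : Set (ℝ × ℝ)) : Set (ℤ × ℤ) := {p | ∃ x ∈ K, near N x p}

def GConn (S : Set (ℤ × ℤ)) : Prop :=
  ∀ p ∈ S, ∀ q ∈ S, Relation.ReflTransGen (fun x y => ga x y ∧ x ∈ S ∧ y ∈ S) p q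

lemma near_floor (N : ℕ) (x : ℝ × ℝ) : near N x (⌊(N : ℝ) * x.1⌋, ⌊(N : ℝ) * x.2⌋) := by
  have h1 := Int.floor_le ((N : ℝ) * x.1)
  have h2 := Int.lt_floor_add_one ((N : ℝ) * x.1)
  have h3 := Int.floor_le ((N : ℝ) * x.2)
  have h4 := Int.lt_floor_add_one ((N : ℝ) * x.2)
  constructor <;> rw [abs_lt] <;> constructor <;> simp only <;> linarith

lemma near_open (N : ℕ) (p : ℤ × ℤ) : IsOpen {x | near N x p} := by
  unfold near
  apply IsOpen.and
  · exact isOpen_lt (by fun_prop) (by fun_prop)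
  · exact isOpen_lt (by fun_prop) (by fun_prop)

lemma abs_int_le {y : ℝ} {a b : ℤ} (h1 : |y - a| < 1) (h2 : |y - b| < 1) :
    a = b ∨ b = a + 1 ∨ a = b + 1 := by
  rw [abs_lt] at h1 h2
  have h3 : (a : ℝ) < b + 2 := by linarith
  have h4 : (b : ℝ) < a + 2 := by linarith
  have h5 : a < b + 2 := by exact_mod_cast h3
  have h6 : b < a + 2 := by exact_mod_cast h4
  omega

lemma ga_h (a b c : ℤ) (h : b = a + 1 ∨ a = b + 1) : ga (a, c) (b, c) := by
  rcases h with rfl | rfl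
  · exact ⟨((a, c), false), Or.inl ⟨rfl, rfl⟩⟩
  · exact ⟨((b, c), false), Or.inr ⟨rfl, rfl⟩⟩

lemma ga_v (a b c : ℤ) (h : b = a + 1 ∨ a = b + 1) : ga (c, a) (c, b) := by
  rcases h with rfl | rfl
  · exact ⟨((c, a), true), Or.inl ⟨rfl, rfl⟩⟩
  · exact ⟨((c, b), true), Or.inr ⟨rfl, rfl⟩⟩

lemma near_reach (N : ℕ) (K : Set (ℝ × ℝ)) (x : ℝ × ℝ) (hx : x ∈ K) (p q : ℤ × ℤ)
    (hp : near N x p) (hq : near N x q) :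
    Relation.ReflTransGen (fun x y => ga x y ∧ x ∈ LatS N K ∧ y ∈ LatS N K) p q := by
  have hm : near N x (q.1, p.2) := ⟨hq.1, hp.2⟩
  refine Relation.ReflTransGen.trans (b := (q.1, p.2)) ?_ ?_
  · rcases abs_int_le hp.1 hq.1 with h | h
    · rw [← h]
    · exact Relation.ReflTransGen.single ⟨ga_h _ _ _ h, ⟨x, hx, hp⟩, ⟨x, hx, hm⟩⟩
  · rcases abs_int_le hp.2 hq.2 with h | h
    · rw [h]
    · exact Relation.ReflTransGen.single ⟨ga_v _ _ _ h, ⟨x, hx, hm⟩, ⟨x, hx, hq⟩⟩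

lemma LatS_conn (N : ℕ) (K : Set (ℝ × ℝ)) (hK : IsPreconnected K) : GConn (LatS N K) := by
  intro p hp q hq
  by_contra hcon
  let R := Relation.ReflTransGen (fun x y => ga x y ∧ x ∈ LatS N K ∧ y ∈ LatS N K) p
  have hU : IsOpen (⋃ r ∈ {r | R r}, {x | near N x r}) :=
    isOpen_biUnion fun r _ => near_open N r
  have hW : IsOpen (⋃ r ∈ {r | ¬ R r}, {x | near N x r}) :=
    isOpen_biUnion fun r _ => near_open N r
  obtain ⟨x, hx, hxU, hxW⟩ := hK _ _ hU hW (by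
    intro x hx
    by_cases h : R (⌊(N : ℝ) * x.1⌋, ⌊(N : ℝ) * x.2⌋)
    · left; exact Set.mem_biUnion (Set.mem_ofPred.mpr h) (near_floor N x)
    · right; exact Set.mem_biUnion (Set.mem_ofPred.mpr h) (near_floor N x))
    (by
      obtain ⟨x, hx, hn⟩ := hp
      exact ⟨x, hx, Set.mem_biUnion (Set.mem_ofPred.mpr (Relation.ReflTransGen.refl : R p)) hn⟩)
    (by
      obtain ⟨x, hx, hn⟩ := hq
      exact ⟨x, hx, Set.mem_biUnion (Set.mem_ofPred.mpr (hcon : ¬ R q)) hn⟩)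
  simp only [Set.mem_iUnion, Set.mem_ofPred_eq] at hxU hxW
  obtain ⟨r, hr, hxr⟩ := hxU
  obtain ⟨w, hw, hxw⟩ := hxW
  exact hw (hr.trans (near_reach N K x hx r w hxr hxw))

lemma LatS_fin (N : ℕ) (K : Set (ℝ × ℝ)) (hK : IsCompact K) : (LatS N K).Finite := by
  obtain ⟨R, hR⟩ := hK.isBounded.exists_norm_le
  obtain ⟨M, hM⟩ := exists_nat_gt (N * R + 1)
  refine Set.Finite.subset ((Set.finite_Icc (-(M:ℤ)) M).prod (Set.finite_Icc (-(M:ℤ)) M)) ?_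
  rintro ⟨a, b⟩ ⟨x, hx, h1, h2⟩
  have hn := hR x hx
  have a1 : |x.1| ≤ R := (norm_fst_le x).trans hn
  have a2 : |x.2| ≤ R := (norm_snd_le x).trans hn
  have aux : ∀ (y : ℝ) (c : ℤ), |y| ≤ R → |(N : ℝ) * y - c| < 1 → c ∈ Set.Icc (-(M:ℤ)) M := by
    intro y c hy hc
    have hNy : |(N:ℝ) * y| ≤ N * R := by
      rw [abs_mul, Nat.abs_cast]; gcongr
    rw [abs_le] at hNy
    rw [abs_lt] at hc
    have h3 : (c : ℝ) ≤ M := by linarith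
    have h4 : -(M : ℝ) ≤ c := by linarith
    constructor
    · exact_mod_cast h4
    · exact_mod_cast h3
  exact ⟨aux _ _ a1 h1, aux _ _ a2 h2⟩

lemma LatS_sep (K K' : Set (ℝ × ℝ)) (hK : IsCompact K) (hK' : IsCompact K') (hd : Disjoint K K') :
    ∀ᶠ N : ℕ in Filter.atTop, Disjoint (LatS N K) (LatS N K') := by
  obtain ⟨r, hr, h⟩ := Metric.exists_pos_forall_lt_edist hK hK'.isClosed hd
  obtain ⟨M, hM⟩ := exists_nat_gt (2 / (r : ℝ))
  filter_upwards [Filter.eventually_ge_atTop M] with N hN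
  rw [Set.disjoint_left]
  rintro p ⟨x, hx, hx1, hx2⟩ ⟨y, hy, hy1, hy2⟩
  have h1 := h x hx y hy
  rw [edist_nndist, ENNReal.coe_lt_coe, ← NNReal.coe_lt_coe, coe_nndist] at h1
  have hr' : (0 : ℝ) < r := hr
  have hN' : 2 < (N : ℝ) * r := by
    rw [div_lt_iff₀ hr'] at hM
    have : (M : ℝ) * r ≤ N * r := by gcongr
    linarith
  have hNp : (0 : ℝ) < N := by
    by_contra hc
    have : (N : ℝ) * r ≤ 0 := mul_nonpos_of_nonpos_of_nonneg (not_lt.mp hc) hr'.le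
    linarith
  have aux : ∀ a b : ℝ, ∀ c : ℤ, |(N : ℝ) * a - c| < 1 → |(N : ℝ) * b - c| < 1 → dist a b < r := by
    intro a b c h1 h2
    rw [abs_lt] at h1 h2
    rw [Real.dist_eq, abs_lt]
    constructor
    · by_contra hc
      have : (N : ℝ) * (a - b) ≤ N * (- r) := by gcongr; linarith
      linarith
    · by_contra hc
      have : (N : ℝ) * r ≤ N * (a - b) := by gcongr; linarith
      linarith
  have : dist x y < r := max_lt (aux _ _ _ hx1 hy1) (aux _ _ _ hx2 hy2)
  linarith

lemma rtg_mono {S T : Set (ℤ × ℤ)} (h : S ⊆ T) {p q : ℤ × ℤ}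
    (hpq : Relation.ReflTransGen (fun x y => ga x y ∧ x ∈ S ∧ y ∈ S) p q) :
    Relation.ReflTransGen (fun x y => ga x y ∧ x ∈ T ∧ y ∈ T) p q :=
  Relation.ReflTransGen.mono (fun _ _ hh => ⟨hh.1, h hh.2.1, h hh.2.2⟩) _ _ hpq

lemma rtg_symm {S : Set (ℤ × ℤ)} {p q : ℤ × ℤ}
    (hpq : Relation.ReflTransGen (fun x y => ga x y ∧ x ∈ S ∧ y ∈ S) p q) :
    Relation.ReflTransGen (fun x y => ga x y ∧ x ∈ S ∧ y ∈ S) q p := by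
  induction hpq with
  | refl => exact .refl
  | tail _ h ih => exact .head ⟨ga_symm h.1, h.2.2, h.2.1⟩ ih

lemma prefix_set (P S : Set (ℤ × ℤ)) (hP : GConn P) (p q : ℤ × ℤ) (hp : p ∈ P) (hq : q ∈ P)
    (hpS : p ∉ S) (hqS : q ∈ S) :
    ∃ Q ⊆ P \ S, p ∈ Q ∧ (∀ x ∈ Q, Relation.ReflTransGen (fun x y => ga x y ∧ x ∈ Q ∧ y ∈ Q) p x) ∧
      ∃ a ∈ Q, ∃ b ∈ S, ga a b := by
  let R := Relation.ReflTransGen (fun x y => ga x y ∧ x ∈ P \ S ∧ y ∈ P \ S) p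
  refine ⟨{x | R x}, ?_, Relation.ReflTransGen.refl, ?_, ?_⟩
  · intro x hx
    rcases Relation.ReflTransGen.cases_tail hx with h | ⟨_, _, h⟩
    · rw [h]; exact ⟨hp, hpS⟩
    · exact h.2.2
  · intro x hx
    have hx' : R x := hx
    induction hx' with
    | refl => exact .refl
    | tail h1 h2 ih => exact .tail (ih h1) ⟨h2.1, h1, h1.tail h2⟩
  · by_contra! hcon
    have : ∀ x, Relation.ReflTransGen (fun x y => ga x y ∧ x ∈ P ∧ y ∈ P) p x → R x ∧ x ∉ S := by
      intro x hx
      induction hx with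
      | refl => exact ⟨.refl, hpS⟩
      | @tail b c _ h2 ih =>
        have hc : c ∉ S := fun hc => hcon b ih.1 c hc h2.1
        exact ⟨ih.1.tail ⟨h2.1, ⟨h2.2.1, ih.2⟩, ⟨h2.2.2, hc⟩⟩, hc⟩
    exact (this q (hP p hp q hq)).2 hqS

lemma discretize {V E : Type} [Finite V] [Finite E] (K : V → Set (ℝ × ℝ)) (C : E → Set (ℝ × ℝ))
    (hKc : ∀ w, IsCompact (K w)) (hKp : ∀ w, IsPreconnected (K w)) (hKn : ∀ w, (K w).Nonempty)
    (hCc : ∀ e, IsCompact (C e)) (hCp : ∀ e, IsPreconnected (C e))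
    (hKK : ∀ w w', w ≠ w' → Disjoint (K w) (K w')) (hCC : ∀ e e', e ≠ e' → Disjoint (C e) (C e'))
    (u v : E → V) (huv : ∀ e, u e ≠ v e)
    (hCK : ∀ e w, w ≠ u e → w ≠ v e → Disjoint (C e) (K w))
    (hu : ∀ e, (C e ∩ K (u e)).Nonempty) (hv : ∀ e, (C e ∩ K (v e)).Nonempty) :
    ∃ B : V → Set (ℤ × ℤ), (∀ w, (B w).Finite) ∧ (∀ w, (B w).Nonempty) ∧
      (∀ w w' p, p ∈ B w → p ∈ B w' → w = w') ∧ (∀ w, GConn (B w)) ∧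
      ∀ e, ∃ p ∈ B (u e), ∃ q ∈ B (v e), ga p q := by
  classical
  have e1 : ∀ᶠ N : ℕ in Filter.atTop, ∀ w w', w ≠ w' → Disjoint (LatS N (K w)) (LatS N (K w')) := by
    simp only [Filter.eventually_all]
    intro w w' h
    exact LatS_sep _ _ (hKc _) (hKc _) (hKK _ _ h)
  have e2 : ∀ᶠ N : ℕ in Filter.atTop, ∀ w w', w ≠ w' → Disjoint (LatS N (C w)) (LatS N (C w')) := by
    simp only [Filter.eventually_all]
    intro w w' h
    exact LatS_sep _ _ (hCc _) (hCc _) (hCC _ _ h)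
  have e3 : ∀ᶠ N : ℕ in Filter.atTop, ∀ e w, w ≠ u e → w ≠ v e →
      Disjoint (LatS N (C e)) (LatS N (K w)) := by
    simp only [Filter.eventually_all]
    intro e w h h'
    exact LatS_sep _ _ (hCc _) (hKc _) (hCK _ _ h h')
  obtain ⟨N, h1, h2, h3⟩ := (e1.and (e2.and e3)).exists
  have hex : ∀ (A A' : Set (ℝ × ℝ)), (A ∩ A').Nonempty → ∃ p, p ∈ LatS N A ∧ p ∈ LatS N A' := by
    rintro A A' ⟨x, hx, hx'⟩
    exact ⟨_, ⟨x, hx, near_floor N x⟩, ⟨x, hx', near_floor N x⟩⟩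
  have hQ : ∀ e, ∃ Q ⊆ LatS N (C e) \ LatS N (K (v e)), ∃ p ∈ LatS N (K (u e)), p ∈ Q ∧
      (∀ x ∈ Q, Relation.ReflTransGen (fun x y => ga x y ∧ x ∈ Q ∧ y ∈ Q) p x) ∧
      ∃ a ∈ Q, ∃ b ∈ LatS N (K (v e)), ga a b := by
    intro e
    obtain ⟨p, hp, hp'⟩ := hex _ _ (hu e)
    obtain ⟨q, hq, hq'⟩ := hex _ _ (hv e)
    obtain ⟨Q, hQ, h⟩ := prefix_set _ (LatS N (K (v e))) (LatS_conn N _ (hCp e)) p q hp hq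
      (Set.disjoint_left.mp (h1 _ _ (huv e)) hp') hq'
    exact ⟨Q, hQ, p, hp', h⟩
  choose Q hQs p hpK hpQ hQc a ha b hb hab using hQ
  let B : V → Set (ℤ × ℤ) := fun w => LatS N (K w) ∪ ⋃ e ∈ {e | u e = w}, Q e
  have hBl : ∀ w, LatS N (K w) ⊆ B w := fun w => Set.subset_union_left
  have hBr : ∀ e, Q e ⊆ B (u e) := fun e x hx =>
    Or.inr (Set.mem_biUnion (by simp) hx)
  have hBc : ∀ w x, x ∈ B w → x ∈ LatS N (K w) ∨ ∃ e, u e = w ∧ x ∈ Q e := by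
    rintro w x (hx | hx)
    · exact Or.inl hx
    · simp only [Set.mem_iUnion, Set.mem_ofPred_eq] at hx
      obtain ⟨e, h, hx⟩ := hx
      exact Or.inr ⟨e, h, hx⟩
  have hQK : ∀ e w x, x ∈ Q e → x ∈ LatS N (K w) → w = u e := by
    intro e w x hx hxw
    by_contra hne
    by_cases hwv : w = v e
    · subst hwv; exact (hQs e hx).2 hxw
    · exact Set.disjoint_left.mp (h3 e w hne hwv) (hQs e hx).1 hxw
  refine ⟨B, ?_, ?_, ?_, ?_, ?_⟩
  · intro w
    refine (LatS_fin N _ (hKc w)).union (Set.Finite.biUnion (Set.toFinite _) fun e _ => ?_)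
    exact (LatS_fin N _ (hCc e)).subset fun x hx => (hQs e hx).1
  · intro w
    obtain ⟨x, hx⟩ := hKn w
    exact ⟨_, hBl w ⟨x, hx, near_floor N x⟩⟩
  · intro w w' x hx hx'
    rcases hBc _ _ hx with k | ⟨e, rfl, k⟩ <;> rcases hBc _ _ hx' with k' | ⟨e', rfl, k'⟩
    · by_contra hne
      exact Set.disjoint_left.mp (h1 _ _ hne) k k'
    · exact hQK _ _ _ k' k
    · exact (hQK _ _ _ k k').symm
    · by_contra hne
      have : e ≠ e' := fun h => hne (by rw [h])
      exact Set.disjoint_left.mp (h2 _ _ this) (hQs e k).1 (hQs e' k').1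
  · intro w
    have hroot : ∀ x ∈ B w, ∃ y ∈ LatS N (K w),
        Relation.ReflTransGen (fun x y => ga x y ∧ x ∈ B w ∧ y ∈ B w) y x := by
      intro x hx
      rcases hBc _ _ hx with k | ⟨e, rfl, k⟩
      · exact ⟨x, k, .refl⟩
      · exact ⟨p e, hpK e, rtg_mono (hBr e) (hQc e x k)⟩
    intro x hx y hy
    obtain ⟨x', hx', hxx⟩ := hroot x hx
    obtain ⟨y', hy', hyy⟩ := hroot y hy
    exact (rtg_symm hxx).trans
      ((rtg_mono (hBl w) (LatS_conn N _ (hKp w) x' hx' y' hy')).trans hyy)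
  · intro e
    exact ⟨a e, hBr e (ha e), b e, hBl _ (hb e), hab e⟩

lemma planar_data {V : Type} {G : SimpleGraph V} (h : IsPlanar G) :
    ∃ (f : V → ℝ × ℝ) (δ : G.edgeSet → ℝ → ℝ × ℝ) (u v : G.edgeSet → V),
      Function.Injective f ∧ (∀ e, Continuous (δ e)) ∧ (∀ e : G.edgeSet, (e : Sym2 V) = s(u e, v e)) ∧
      (∀ e, δ e 0 = f (u e)) ∧ (∀ e, δ e 1 = f (v e)) ∧
      (∀ e e' s t, 0 < s → s < 1 → 0 < t → t < 1 → δ e s = δ e' t → e = e' ∧ s = t) ∧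
      (∀ e t w, 0 < t → t < 1 → δ e t ≠ f w) := by
  obtain ⟨f, γ, hf, hc, hend, hinj, hint, hcr⟩ := h
  choose u v huv hu hv using hend
  have h01 : (0 : ℝ) ≤ 1 := by norm_num
  have hval : ∀ e t (h0 : 0 ≤ t) (h1 : t ≤ 1), Set.IccExtend h01 (γ e) t = γ e ⟨t, h0, h1⟩ :=
    fun e t h0 h1 => Set.IccExtend_of_mem h01 (γ e) ⟨h0, h1⟩
  refine ⟨f, fun e => Set.IccExtend h01 (γ e), u, v, hf, fun e => (hc e).Icc_extend', huv, ?_, ?_,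
    ?_, ?_⟩
  · intro e; exact (hval e 0 le_rfl h01).trans (hu e)
  · intro e; exact (hval e 1 h01 le_rfl).trans (hv e)
  · intro e e' s t hs0 hs1 ht0 ht1 heq
    simp only at heq
    rw [hval e s hs0.le hs1.le, hval e' t ht0.le ht1.le] at heq
    by_cases hee : e = e'
    · subst hee
      exact ⟨rfl, congrArg Subtype.val (hinj e heq)⟩
    · obtain ⟨w, hw⟩ := hcr e e' hee _ _ heq
      exact absurd hw.symm (hint e _ hs0.ne' hs1.ne w)
  · intro e t w h0 h1
    simp only
    rw [hval e t h0.le h1.le]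
    exact hint e _ h0.ne' h1.ne w

lemma planar_minor {V : Type} [Finite V] {G : SimpleGraph V} (h : IsPlanar G) :
    ∃ B : V → Set (ℤ × ℤ), (∀ w, (B w).Finite) ∧ (∀ w, (B w).Nonempty) ∧
      (∀ w w' p, p ∈ B w → p ∈ B w' → w = w') ∧ (∀ w, GConn (B w)) ∧
      ∀ a b, G.Adj a b → ∃ p ∈ B a, ∃ q ∈ B b, ga p q := by
  obtain ⟨f, δ, u, v, hf, hc, huv, hu, hv, hcr, hint⟩ := planar_data h
  let K : V → Set (ℝ × ℝ) := fun w => {f w} ∪ ((⋃ e ∈ {e | u e = w}, δ e '' Set.Icc 0 (1/3)) ∪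
    (⋃ e ∈ {e | v e = w}, δ e '' Set.Icc (2/3) 1))
  let C : G.edgeSet → Set (ℝ × ℝ) := fun e => δ e '' Set.Icc (1/3) (2/3)
  have hK1 : ∀ w, f w ∈ K w := fun w => Or.inl rfl
  have hK2 : ∀ e, δ e '' Set.Icc 0 (1/3) ⊆ K (u e) := fun e x hx =>
    Or.inr (Or.inl (Set.mem_biUnion (by simp) hx))
  have hK3 : ∀ e, δ e '' Set.Icc (2/3) 1 ⊆ K (v e) := fun e x hx =>
    Or.inr (Or.inr (Set.mem_biUnion (by simp) hx))
  have hKcase : ∀ w x, x ∈ K w → x = f w ∨ (∃ e, u e = w ∧ x ∈ δ e '' Set.Icc 0 (1/3)) ∨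
      (∃ e, v e = w ∧ x ∈ δ e '' Set.Icc (2/3) 1) := by
    rintro w x (hx | hx | hx)
    · exact Or.inl hx
    · simp only [Set.mem_iUnion, Set.mem_ofPred_eq] at hx
      obtain ⟨e, h, hx⟩ := hx
      exact Or.inr (Or.inl ⟨e, h, hx⟩)
    · simp only [Set.mem_iUnion, Set.mem_ofPred_eq] at hx
      obtain ⟨e, h, hx⟩ := hx
      exact Or.inr (Or.inr ⟨e, h, hx⟩)
  have hKcl : ∀ w x, x ∈ K w → x = f w ∨ ∃ e t, 0 < t ∧ t < 1 ∧ x = δ e t ∧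
      ((u e = w ∧ t < 1/2) ∨ (v e = w ∧ 1/2 < t)) := by
    intro w x hx
    rcases hKcase w x hx with hx | ⟨e, rfl, t, ⟨h0, h1⟩, rfl⟩ | ⟨e, rfl, t, ⟨h0, h1⟩, rfl⟩
    · exact Or.inl hx
    · rcases h0.eq_or_lt with rfl | h0
      · exact Or.inl (hu e)
      · exact Or.inr ⟨e, t, h0, by linarith, rfl, Or.inl ⟨rfl, by linarith⟩⟩
    · rcases h1.eq_or_lt with rfl | h1
      · exact Or.inl (hv e)
      · exact Or.inr ⟨e, t, by linarith, h1, rfl, Or.inr ⟨rfl, by linarith⟩⟩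
  have key : ∃ B : V → Set (ℤ × ℤ), (∀ w, (B w).Finite) ∧ (∀ w, (B w).Nonempty) ∧
      (∀ w w' p, p ∈ B w → p ∈ B w' → w = w') ∧ (∀ w, GConn (B w)) ∧
      ∀ e, ∃ p ∈ B (u e), ∃ q ∈ B (v e), ga p q := by
    refine discretize K C ?_ ?_ (fun w => ⟨f w, hK1 w⟩) ?_ ?_ ?_ ?_ u v ?_ ?_ ?_ ?_
    · intro w
      refine isCompact_singleton.union (IsCompact.union ?_ ?_)
      · exact (Set.toFinite _).isCompact_biUnion fun e _ => isCompact_Icc.image (hc e)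
      · exact (Set.toFinite _).isCompact_biUnion fun e _ => isCompact_Icc.image (hc e)
    · intro w
      refine isPreconnected_of_forall (f w) fun y hy0 => ?_
      rcases hKcase w y hy0 with rfl | ⟨e, rfl, hy⟩ | ⟨e, rfl, hy⟩
      · exact ⟨{f w}, by simpa using hK1 w, rfl, rfl, isPreconnected_singleton⟩
      · exact ⟨_, hK2 e, ⟨0, by norm_num, hu e⟩, hy, isPreconnected_Icc.image _ (hc e).continuousOn⟩
      · exact ⟨_, hK3 e, ⟨1, by norm_num, hv e⟩, hy, isPreconnected_Icc.image _ (hc e).continuousOn⟩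
    · exact fun e => isCompact_Icc.image (hc e)
    · exact fun e => isPreconnected_Icc.image _ (hc e).continuousOn
    · intro w w' hne
      rw [Set.disjoint_left]
      intro x hx hx'
      rcases hKcl _ _ hx with h1 | ⟨e, t, h0, h1, hxe, h2⟩ <;>
      rcases hKcl _ _ hx' with k1 | ⟨e', t', k0, k1, kxe, k2⟩
      · exact hne (hf (h1.symm.trans k1))
      · exact hint e' t' w k0 k1 (kxe.symm.trans h1)
      · exact hint e t w' h0 h1 (hxe.symm.trans k1)
      · obtain ⟨rfl, rfl⟩ := hcr e e' t t' h0 h1 k0 k1 (hxe.symm.trans kxe)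
        rcases h2 with ⟨rfl, h2⟩ | ⟨rfl, h2⟩ <;> rcases k2 with ⟨rfl, k2⟩ | ⟨rfl, k2⟩
        · exact hne rfl
        · linarith
        · linarith
        · exact hne rfl
    · intro e e' hne
      rw [Set.disjoint_left]
      rintro x ⟨t, ⟨h0, h1⟩, rfl⟩ ⟨t', ⟨k0, k1⟩, hx⟩
      exact hne (hcr e e' t t' (by linarith) (by linarith) (by linarith) (by linarith) hx.symm).1
    · intro e heq
      have h1 := e.2
      rw [huv e, heq] at h1
      exact G.loopless.irrefl _ h1
    · intro e w h1 h2
      rw [Set.disjoint_left]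
      rintro x ⟨t, ⟨h0, h1⟩, rfl⟩ hx
      rcases hKcl _ _ hx with k1 | ⟨e', t', k0, k1, kxe, k2⟩
      · exact hint e t w (by linarith) (by linarith) k1
      · obtain ⟨rfl, rfl⟩ := hcr e e' t t' (by linarith) (by linarith) k0 k1 kxe
        rcases k2 with ⟨rfl, k2⟩ | ⟨rfl, k2⟩ <;> contradiction
    · intro e
      exact ⟨δ e (1/3), ⟨1/3, by norm_num, rfl⟩, hK2 e ⟨1/3, by norm_num, rfl⟩⟩
    · intro e
      exact ⟨δ e (2/3), ⟨2/3, by norm_num, rfl⟩, hK3 e ⟨2/3, by norm_num, rfl⟩⟩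
  obtain ⟨B, b1, b2, b3, b4, b5⟩ := key
  refine ⟨B, b1, b2, b3, b4, ?_⟩
  intro a b hab
  obtain ⟨e, he⟩ : ∃ e : G.edgeSet, (e : Sym2 V) = s(a, b) := ⟨⟨s(a, b), hab⟩, rfl⟩
  obtain ⟨p, hp, q, hq, hpq⟩ := b5 e
  have := he.symm.trans (huv e)
  simp only [Sym2.eq_iff] at this
  rcases this with ⟨h1, h2⟩ | ⟨h1, h2⟩
  · exact ⟨p, by rw [h1]; exact hp, q, by rw [h2]; exact hq, hpq⟩
  · exact ⟨q, by rw [h1]; exact hq, p, by rw [h2]; exact hp, ga_symm hpq⟩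

lemma planar_bound {n : ℕ} (hn : 2 ≤ n) {G : SimpleGraph (Fin n ⊕ Fin n)} (h : IsPlanar G)
    (E : Finset (Fin n × Fin n)) (hE : ∀ e ∈ E, G.Adj (Sum.inl e.1) (Sum.inr e.2)) :
    E.card ≤ 4 * n - 4 := by
  obtain ⟨B, b1, b2, b3, b4, b5⟩ := planar_minor h
  exact minor_bound hn E B b1 b2 b3 b4 fun e he => b5 _ _ (hE e he)

lemma IsPlanar.of_hom {V W : Type*} {G : SimpleGraph V} {H : SimpleGraph W} (h : IsPlanar H)
    (g : V → W) (hg : Function.Injective g) (hom : ∀ a b, G.Adj a b → H.Adj (g a) (g b)) :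
    IsPlanar G := by
  obtain ⟨f, γ, hf, hc, hend, hinj, hint, hcr⟩ := h
  let m : G.edgeSet → H.edgeSet := fun e => ⟨Sym2.map g e.1, by
    obtain ⟨e, he⟩ := e
    induction e using Sym2.ind with
    | _ a b => exact hom a b he⟩
  have hm : Function.Injective m := by
    intro e e' hee
    exact Subtype.ext (Sym2.map.injective hg (congrArg Subtype.val hee))
  have hend' : ∀ e : G.edgeSet, ∃ u v : V, (e : Sym2 V) = s(u, v) ∧
      γ (m e) ⟨0, by norm_num⟩ = f (g u) ∧ γ (m e) ⟨1, by norm_num⟩ = f (g v) := by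
    intro e
    obtain ⟨u, v, huv, h0, h1⟩ := hend (m e)
    obtain ⟨e, he⟩ := e
    induction e using Sym2.ind with
    | _ a b =>
      simp only [m, Sym2.map_mk, Sym2.eq_iff] at huv
      rcases huv with ⟨rfl, rfl⟩ | ⟨rfl, rfl⟩
      · exact ⟨a, b, rfl, h0, h1⟩
      · exact ⟨b, a, Sym2.eq_swap, h0, h1⟩
  refine ⟨f ∘ g, fun e => γ (m e), hf.comp hg, fun e => hc _, hend', fun e => hinj _,
    fun e t h0 h1 v => hint _ t h0 h1 _, ?_⟩
  intro e e' hne s t heq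
  have hsr := hcr (m e) (m e') (fun h => hne (hm h)) s t heq
  obtain ⟨w, hw⟩ := hsr
  obtain ⟨u, v, huv, h0, h1⟩ := hend' e
  by_cases hs0 : (s : ℝ) = 0
  · have : s = ⟨0, by norm_num⟩ := Subtype.ext hs0
    rw [this]; exact ⟨u, h0.symm⟩
  · by_cases hs1 : (s : ℝ) = 1
    · have : s = ⟨1, by norm_num⟩ := Subtype.ext hs1
      rw [this]; exact ⟨v, h1.symm⟩
    · exact absurd hw.symm (hint (m e) s hs0 hs1 w)

abbrev KK (n : ℕ) := completeMultipartiteGraph ![Fin 2, Fin n, Fin n]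

def emb (n : ℕ) : Fin n ⊕ Fin n → Σ i, (![Fin 2, Fin n, Fin n] : Fin 3 → Type) i
  | Sum.inl a => ⟨1, a⟩
  | Sum.inr a => ⟨2, a⟩

lemma emb_inj (n : ℕ) : Function.Injective (emb n) := by
  rintro (a | a) (b | b) h
  · have h := Sigma.mk.inj_iff.1 h
    exact congrArg _ (eq_of_heq h.2)
  · have h := Sigma.mk.inj_iff.1 h
    exact absurd h.1 (by decide)
  · have h := Sigma.mk.inj_iff.1 h
    exact absurd h.1 (by decide)
  · have h := Sigma.mk.inj_iff.1 h
    exact congrArg _ (eq_of_heq h.2)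

lemma lower_bound {n t : ℕ} (hn : 2 ≤ n)
    (H : Fin t → SimpleGraph (Σ i, (![Fin 2, Fin n, Fin n] : Fin 3 → Type) i))
    (hp : ∀ i, IsPlanar (H i)) (hs : (⨆ i, H i) = KK n) : n * n ≤ t * (4 * n - 4) := by
  classical
  let E : Fin t → Finset (Fin n × Fin n) := fun i =>
    Finset.univ.filter fun e => (H i).Adj (emb n (Sum.inl e.1)) (emb n (Sum.inr e.2))
  have h1 : ∀ i, (E i).card ≤ 4 * n - 4 := by
    intro i
    have hpl : IsPlanar ((H i).comap (emb n)) := (hp i).of_hom (emb n) (emb_inj n) fun a b h => h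
    refine planar_bound hn hpl _ fun e he => ?_
    exact (Finset.mem_filter.1 he).2
  have h2 : (Finset.univ : Finset (Fin n × Fin n)) ⊆ Finset.univ.biUnion E := by
    intro e _
    have : (KK n).Adj (emb n (Sum.inl e.1)) (emb n (Sum.inr e.2)) := by
      show (1 : Fin 3) ≠ 2
      decide
    rw [← hs, iSup_adj] at this
    obtain ⟨i, hi⟩ := this
    exact Finset.mem_biUnion.2 ⟨i, Finset.mem_univ _, Finset.mem_filter.2 ⟨Finset.mem_univ _, hi⟩⟩
  have h3 := Finset.card_le_card h2
  have h4 := Finset.card_biUnion_le_card_mul Finset.univ E (4 * n - 4) (fun i _ => h1 i)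
  simp at h3 h4
  exact h3.trans h4


def seg (p q : ℝ × ℝ) (t : ℝ) : ℝ × ℝ := ((1 - t) * p.1 + t * q.1, (1 - t) * p.2 + t * q.2)

lemma seg_inj {p q : ℝ × ℝ} (h : p ≠ q) {s t : ℝ} (hst : seg p q s = seg p q t) : s = t := by
  by_contra hne
  have hd : s - t ≠ 0 := sub_ne_zero.2 hne
  simp only [seg, Prod.mk.injEq] at hst
  apply h
  ext
  · have : (s - t) * (q.1 - p.1) = 0 := by linarith [hst.1]
    rcases mul_eq_zero.1 this with h | h
    · exact absurd h hd
    · linarith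
  · have : (s - t) * (q.2 - p.2) = 0 := by linarith [hst.2]
    rcases mul_eq_zero.1 this with h | h
    · exact absurd h hd
    · linarith

lemma straight {V : Type*} (R : V → V → Prop) (f : V → ℝ × ℝ) (hf : Function.Injective f)
    (hint : ∀ a b t w, R a b → 0 < t → t < 1 → seg (f a) (f b) t ≠ f w)
    (hcr : ∀ a b c d s t, R a b → R c d → 0 < s → s < 1 → 0 < t → t < 1 →
      seg (f a) (f b) s = seg (f c) (f d) t → a = c ∧ b = d) :
    IsPlanar (SimpleGraph.fromRel R) := by
  have hex : ∀ e : (SimpleGraph.fromRel R).edgeSet, ∃ a b, (e : Sym2 V) = s(a, b) ∧ R a b := by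
    rintro ⟨e, he⟩
    induction e using Sym2.ind with
    | _ a b =>
      have he : (SimpleGraph.fromRel R).Adj a b := he
      rw [SimpleGraph.fromRel_adj] at he
      rcases he.2 with h | h
      · exact ⟨a, b, rfl, h⟩
      · exact ⟨b, a, Sym2.eq_swap, h⟩
  choose a b hab hR using hex
  have hne : ∀ e, f (a e) ≠ f (b e) := by
    intro e h
    have h1 := e.2
    rw [hab e, hf h] at h1
    exact (SimpleGraph.fromRel R).loopless.irrefl _ h1
  refine ⟨f, fun e t => seg (f (a e)) (f (b e)) t, hf, ?_, ?_, ?_, ?_, ?_⟩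
  · intro e
    unfold seg
    fun_prop
  · intro e
    refine ⟨a e, b e, hab e, ?_, ?_⟩ <;> ext <;> simp [seg]
  · intro e s t h
    exact Subtype.ext (seg_inj (hne e) h)
  · intro e t h0 h1 v
    exact hint _ _ _ _ (hR e) (lt_of_le_of_ne t.2.1 (Ne.symm h0)) (lt_of_le_of_ne t.2.2 h1)
  · intro e e' hee s t hst
    have hend : ∀ (e) (s : ℝ), s = 0 ∨ s = 1 → seg (f (a e)) (f (b e)) s ∈ Set.range f := by
      rintro e s (rfl | rfl)
      · exact ⟨a e, by ext <;> simp [seg]⟩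
      · exact ⟨b e, by ext <;> simp [seg]⟩
    by_cases hs : (s : ℝ) = 0 ∨ (s : ℝ) = 1
    · exact hend e s hs
    by_cases ht : (t : ℝ) = 0 ∨ (t : ℝ) = 1
    · simp only at hst ⊢
      rw [hst]
      exact hend e' t ht
    push Not at hs ht
    have := hcr _ _ _ _ _ _ (hR e) (hR e') (lt_of_le_of_ne s.2.1 (Ne.symm hs.1))
      (lt_of_le_of_ne s.2.2 hs.2) (lt_of_le_of_ne t.2.1 (Ne.symm ht.1))
      (lt_of_le_of_ne t.2.2 ht.2) hst
    exact absurd (Subtype.ext ((hab e).trans (by rw [this.1, this.2, ← hab e']))) hee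

inductive BookR : Fin 2 ⊕ ℕ → Fin 2 ⊕ ℕ → Prop
  | pole (p : Fin 2) (m : ℕ) : BookR (Sum.inl p) (Sum.inr m)
  | page (i : ℕ) : BookR (Sum.inr (2 * i)) (Sum.inr (2 * i + 1))

def bookPos : Fin 2 ⊕ ℕ → ℝ × ℝ
  | Sum.inl p => (0, 1 - 2 * (p : ℕ))
  | Sum.inr m => (m + 1, 0)

lemma fin2_eq {p q : Fin 2} {c : ℝ} {d : ℝ} (hc : 0 < c) (hd : 0 < d)
    (h : c * (1 - 2 * ((p : ℕ) : ℝ)) = d * (1 - 2 * ((q : ℕ) : ℝ))) : p = q ∧ c = d := by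
  fin_cases p <;> fin_cases q <;> norm_num at h ⊢ <;> linarith

lemma fin2_ne {p : Fin 2} {c : ℝ} (hc : 0 < c) : c * (1 - 2 * ((p : ℕ) : ℝ)) ≠ 0 := by
  fin_cases p <;> norm_num <;> linarith

lemma book_planar : IsPlanar (SimpleGraph.fromRel BookR) := by
  have hf : Function.Injective bookPos := by
    rintro (p | m) (q | l) h <;> simp only [bookPos, Prod.mk.injEq] at h
    · rw [(fin2_eq one_pos one_pos (by linarith [h.2]) : p = q ∧ (1 : ℝ) = 1).1]
    · have : (0 : ℝ) ≤ l := Nat.cast_nonneg l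
      linarith [h.1]
    · have : (0 : ℝ) ≤ m := Nat.cast_nonneg m
      linarith [h.1]
    · have : (m : ℝ) = l := by linarith [h.1]
      rw [Nat.cast_inj.1 this]
  have hmid : ∀ (i j : ℕ) (t : ℝ), 0 < t → t < 1 → (i : ℝ) + t ≠ j := by
    intro i j t h0 h1 h
    have h2 : i < j := by exact_mod_cast (by linarith : (i : ℝ) < j)
    have h3 : j < i + 1 := by exact_mod_cast (by push_cast; linarith : (j : ℝ) < (i + 1 : ℕ))
    omega
  refine straight _ bookPos hf ?_ ?_
  · intro a b t w hR h0 h1 h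
    cases hR with
    | pole p m =>
      have hm : (0 : ℝ) ≤ m := Nat.cast_nonneg m
      rcases w with q | l <;> simp only [bookPos, seg, Prod.mk.injEq] at h
      · have : t * ((m : ℝ) + 1) = 0 := by linarith [h.1]
        have : 0 < t * ((m : ℝ) + 1) := by positivity
        linarith
      · exact fin2_ne (p := p) (sub_pos.2 h1) (by linarith [h.2])
    | page i =>
      rcases w with q | l <;> simp only [bookPos, seg, Prod.mk.injEq] at h
      · exact fin2_ne (p := q) one_pos (by linarith [h.2])
      · apply hmid (2 * i) l t h0 h1
        have := h.1
        push_cast at this ⊢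
        linarith
  · intro a b c d s t hR hR' s0 s1 t0 t1 h
    cases hR with
    | pole p m =>
      cases hR' with
      | pole q l =>
        simp only [bookPos, seg, Prod.mk.injEq] at h
        obtain ⟨rfl, hst⟩ := fin2_eq (p := p) (q := q) (sub_pos.2 s1) (sub_pos.2 t1)
          (by linarith [h.2])
        have hst : s = t := by linarith
        subst hst
        have : s * ((m : ℝ) - l) = 0 := by linarith [h.1]
        rcases mul_eq_zero.1 this with h | h
        · linarith
        · have : (m : ℝ) = l := by linarith
          rw [Nat.cast_inj.1 this]; exact ⟨rfl, rfl⟩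
      | page i =>
        simp only [bookPos, seg, Prod.mk.injEq] at h
        exact absurd (by linarith [h.2]) (fin2_ne (p := p) (sub_pos.2 s1))
    | page i =>
      cases hR' with
      | pole q l =>
        simp only [bookPos, seg, Prod.mk.injEq] at h
        exact absurd (by linarith [h.2]) (fin2_ne (p := q) (sub_pos.2 t1))
      | page j =>
        simp only [bookPos, seg, Prod.mk.injEq] at h
        have h := h.1
        push_cast at h
        have h2 : 2 * i < 2 * j + 1 := by
          exact_mod_cast (by push_cast; linarith : ((2 * i : ℕ) : ℝ) < (2 * j + 1 : ℕ))
        have h3 : 2 * j < 2 * i + 1 := by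
          exact_mod_cast (by push_cast; linarith : ((2 * j : ℕ) : ℝ) < (2 * i + 1 : ℕ))
        have : i = j := by omega
        subst this
        exact ⟨rfl, rfl⟩

def rot (k : Fin 4) (p : ℝ × ℝ) : ℝ × ℝ :=
  match k with
  | 0 => p
  | 1 => (-p.2, p.1)
  | 2 => (-p.1, -p.2)
  | 3 => (p.2, -p.1)

lemma rot_inj {k k' : Fin 4} {p q : ℝ × ℝ} (h1 : 0 < p.1) (h2 : 0 ≤ p.2) (h3 : 0 < q.1)
    (h4 : 0 ≤ q.2) (h : rot k p = rot k' q) : k = k' ∧ p.1 = q.1 ∧ p.2 = q.2 := by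
  obtain ⟨x, y⟩ := p
  obtain ⟨x', y'⟩ := q
  simp only at h1 h2 h3 h4
  fin_cases k <;> fin_cases k' <;> simp [rot] at h ⊢ <;> obtain ⟨ha, hb⟩ := h <;>
    first
    | (constructor <;> linarith)
    | linarith

lemma rot_seg (k : Fin 4) (p q : ℝ × ℝ) (t : ℝ) :
    seg (rot k p) (rot k q) t = rot k (seg p q t) := by
  fin_cases k <;> simp [rot, seg] <;> (try constructor) <;> ring

lemma rot_succ (k : Fin 4) (x : ℝ) : rot (k + 1) (x, 0) = rot k (0, x) := by
  fin_cases k <;> simp [rot]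

noncomputable def lam : Option ℕ → ℝ
  | none => 1
  | some m => m / (m + 1)

lemma lam_nonneg (o : Option ℕ) : 0 ≤ lam o := by
  cases o with
  | none => simp [lam]
  | some m => simp only [lam]; positivity

lemma lam_lt (m : ℕ) : lam (some m) < 1 := by
  simp only [lam]
  rw [div_lt_one (by positivity)]
  linarith

lemma lam_le (o : Option ℕ) : lam o ≤ 1 := by
  cases o with
  | none => simp [lam]
  | some m => exact (lam_lt m).le

lemma lam_inj {o o' : Option ℕ} (h : lam o = lam o') : o = o' := by
  cases o with
  | none =>
    cases o' with
    | none => rfl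
    | some m => exact absurd h.symm (lam_lt m).ne
  | some m =>
    cases o' with
    | none => exact absurd h (lam_lt m).ne
    | some l =>
      simp only [lam] at h
      rw [div_eq_div_iff (by positivity) (by positivity)] at h
      have : (m : ℝ) = l := by linarith
      rw [Nat.cast_inj.1 this]

noncomputable def ringPos : Fin 4 × Option ℕ → ℝ × ℝ
  | (k, none) => rot k (1, 0)
  | (k, some m) => rot k (3 * (1 - lam (some m)), lam (some m))

inductive RingR : Fin 4 × Option ℕ → Fin 4 × Option ℕ → Prop
  | A (k : Fin 4) (m : ℕ) : RingR (k, none) (k, some m)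
  | B (k : Fin 4) : RingR (k, none) (k + 1, none)
  | C (k : Fin 4) (m : ℕ) : RingR (k + 1, some 0) (k, some m)

def tgt (k : Fin 4) : Option ℕ → Fin 4 × Option ℕ
  | none => (k + 1, none)
  | some m => (k, some m)

lemma ringR_cases {a b : Fin 4 × Option ℕ} (h : RingR a b) (s : ℝ) :
    (∃ k o, a = (k, none) ∧ b = tgt k o ∧ seg (ringPos a) (ringPos b) s =
      rot k (1 - s + 3 * s * (1 - lam o), s * lam o)) ∨
    (∃ k m, a = (k + 1, some 0) ∧ b = (k, some m) ∧ seg (ringPos a) (ringPos b) s =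
      rot k (3 * s * (1 - lam (some m)), 3 * (1 - s) + s * lam (some m))) := by
  cases h with
  | A k m =>
    refine Or.inl ⟨k, some m, rfl, rfl, ?_⟩
    simp only [ringPos, rot_seg]
    congr 1
    ext <;> simp only [seg] <;> ring
  | B k =>
    refine Or.inl ⟨k, none, rfl, rfl, ?_⟩
    simp only [ringPos, rot_succ, rot_seg]
    congr 1
    ext <;> simp only [seg, lam] <;> ring
  | C k m =>
    refine Or.inr ⟨k, m, rfl, rfl, ?_⟩
    have : ringPos (k + 1, some 0) = rot k (0, 3) := by
      rw [← rot_succ]; simp [ringPos, lam]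
    rw [this]
    simp only [ringPos, rot_seg]
    congr 1
    ext <;> simp only [seg] <;> ring

lemma ringPos_cases (w : Fin 4 × Option ℕ) : (∃ k, w = (k, none) ∧ ringPos w = rot k (1, 0)) ∨
    (∃ k m, w = (k, some m) ∧ ringPos w = rot k (3 * (1 - lam (some m)), lam (some m))) := by
  obtain ⟨k, _ | m⟩ := w
  · exact Or.inl ⟨k, rfl, rfl⟩
  · exact Or.inr ⟨k, m, rfl, rfl⟩

lemma ring_planar : IsPlanar (SimpleGraph.fromRel RingR) := by
  have hA : ∀ s l : ℝ, 0 < s → s < 1 → 0 ≤ l → l ≤ 1 →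
      0 < 1 - s + 3 * s * (1 - l) ∧ 0 ≤ s * l := fun s l h0 h1 h2 h3 =>
    ⟨by have : 0 ≤ 3 * s * (1 - l) := mul_nonneg (by linarith) (by linarith)
        linarith, by positivity⟩
  have hC : ∀ s l : ℝ, 0 < s → s < 1 → 0 ≤ l → l < 1 →
      0 < 3 * s * (1 - l) ∧ 0 ≤ 3 * (1 - s) + s * l := fun s l h0 h1 h2 h3 =>
    ⟨mul_pos (by linarith) (by linarith), by have : 0 ≤ s * l := by positivity
                                             linarith⟩
  have hW : ∀ l : ℝ, l < 1 → 0 < 3 * (1 - l) := fun l h => by linarith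
  refine straight _ ringPos ?_ ?_ ?_
  · intro w w' h
    rcases ringPos_cases w with ⟨k, rfl, h1⟩ | ⟨k, m, rfl, h1⟩ <;>
    rcases ringPos_cases w' with ⟨k', rfl, h2⟩ | ⟨k', m', rfl, h2⟩ <;> rw [h1, h2] at h
    · rw [(rot_inj (by norm_num) (by norm_num) (by norm_num) (by norm_num) h).1]
    · obtain ⟨_, h3, h4⟩ := rot_inj (by norm_num) (by norm_num) (hW _ (lam_lt m')) (lam_nonneg (some m')) h
      simp only at h3 h4
      linarith
    · obtain ⟨_, h3, h4⟩ := rot_inj (hW _ (lam_lt m)) (lam_nonneg (some m)) (by norm_num) (by norm_num) h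
      simp only at h3 h4
      linarith
    · obtain ⟨rfl, h3, h4⟩ := rot_inj (hW _ (lam_lt m)) (lam_nonneg (some m)) (hW _ (lam_lt m'))
        (lam_nonneg (some m')) h
      simp only at h4
      rw [lam_inj h4]
  · intro a b t w hR h0 h1 h
    rcases ringR_cases hR t with ⟨k, o, rfl, rfl, e⟩ | ⟨k, m, rfl, rfl, e⟩ <;>
    rcases ringPos_cases w with ⟨k', rfl, e2⟩ | ⟨k', m', rfl, e2⟩ <;> rw [e, e2] at h
    · obtain ⟨_, h3, h4⟩ := rot_inj (hA _ _ h0 h1 (lam_nonneg o) (lam_le o)).1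
        (hA _ _ h0 h1 (lam_nonneg o) (lam_le o)).2 (by norm_num) (by norm_num) h
      simp only at h3 h4
      nlinarith
    · obtain ⟨_, h3, h4⟩ := rot_inj (hA _ _ h0 h1 (lam_nonneg o) (lam_le o)).1
        (hA _ _ h0 h1 (lam_nonneg o) (lam_le o)).2 (hW _ (lam_lt m')) (lam_nonneg (some m')) h
      simp only at h3 h4
      nlinarith
    · obtain ⟨_, h3, h4⟩ := rot_inj (hC _ _ h0 h1 (lam_nonneg _) (lam_lt m)).1
        (hC _ _ h0 h1 (lam_nonneg _) (lam_lt m)).2 (by norm_num) (by norm_num) h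
      simp only at h3 h4
      nlinarith
    · obtain ⟨_, h3, h4⟩ := rot_inj (hC _ _ h0 h1 (lam_nonneg _) (lam_lt m)).1
        (hC _ _ h0 h1 (lam_nonneg _) (lam_lt m)).2 (hW _ (lam_lt m')) (lam_nonneg (some m')) h
      simp only at h3 h4
      nlinarith
  · intro a b c d s t hR hR' s0 s1 t0 t1 h
    rcases ringR_cases hR s with ⟨k, o, rfl, rfl, e⟩ | ⟨k, m, rfl, rfl, e⟩ <;>
    rcases ringR_cases hR' t with ⟨k', o', rfl, rfl, e2⟩ | ⟨k', m', rfl, rfl, e2⟩ <;>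
      rw [e, e2] at h
    · obtain ⟨rfl, h3, h4⟩ := rot_inj (hA _ _ s0 s1 (lam_nonneg o) (lam_le o)).1
        (hA _ _ s0 s1 (lam_nonneg o) (lam_le o)).2 (hA _ _ t0 t1 (lam_nonneg o') (lam_le o')).1
        (hA _ _ t0 t1 (lam_nonneg o') (lam_le o')).2 h
      simp only at h3 h4
      have : s = t := by linarith
      subst this
      have := lam_inj (mul_left_cancel₀ s0.ne' h4)
      subst this
      exact ⟨rfl, rfl⟩
    · obtain ⟨rfl, h3, h4⟩ := rot_inj (hA _ _ s0 s1 (lam_nonneg o) (lam_le o)).1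
        (hA _ _ s0 s1 (lam_nonneg o) (lam_le o)).2 (hC _ _ t0 t1 (lam_nonneg _) (lam_lt m')).1
        (hC _ _ t0 t1 (lam_nonneg _) (lam_lt m')).2 h
      simp only at h3 h4
      nlinarith
    · obtain ⟨rfl, h3, h4⟩ := rot_inj (hC _ _ s0 s1 (lam_nonneg _) (lam_lt m)).1
        (hC _ _ s0 s1 (lam_nonneg _) (lam_lt m)).2 (hA _ _ t0 t1 (lam_nonneg o') (lam_le o')).1
        (hA _ _ t0 t1 (lam_nonneg o') (lam_le o')).2 h
      simp only at h3 h4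
      nlinarith
    · obtain ⟨rfl, h3, h4⟩ := rot_inj (hC _ _ s0 s1 (lam_nonneg _) (lam_lt m)).1
        (hC _ _ s0 s1 (lam_nonneg _) (lam_lt m)).2 (hC _ _ t0 t1 (lam_nonneg _) (lam_lt m')).1
        (hC _ _ t0 t1 (lam_nonneg _) (lam_lt m')).2 h
      simp only at h3 h4
      have : s = t := by linarith
      subst this
      have := lam_inj (mul_left_cancel₀ s0.ne' (by linarith : s * lam (some m) = s * lam (some m')))
      rw [this]
      exact ⟨rfl, rfl⟩

abbrev KV (n : ℕ) := Σ i, (![Fin 2, Fin n, Fin n] : Fin 3 → Type) i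

def code (n : ℕ) : KV n → Fin 2 ⊕ (ℕ ⊕ ℕ)
  | ⟨0, a⟩ => Sum.inl (show Fin 2 from a)
  | ⟨1, a⟩ => Sum.inr (Sum.inl (show Fin n from a).val)
  | ⟨2, a⟩ => Sum.inr (Sum.inr (show Fin n from a).val)

lemma kv_cases {n : ℕ} (v : KV n) : (∃ a : Fin 2, v = ⟨0, a⟩) ∨ (∃ a : Fin n, v = ⟨1, a⟩) ∨
    (∃ a : Fin n, v = ⟨2, a⟩) := by
  obtain ⟨i, a⟩ := v
  match i, a with
  | 0, a => exact Or.inl ⟨a, rfl⟩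
  | 1, a => exact Or.inr (Or.inl ⟨a, rfl⟩)
  | 2, a => exact Or.inr (Or.inr ⟨a, rfl⟩)

lemma code_inj (n : ℕ) : Function.Injective (code n) := by
  intro v w h
  rcases kv_cases v with ⟨a, rfl⟩ | ⟨a, rfl⟩ | ⟨a, rfl⟩ <;>
  rcases kv_cases w with ⟨b, rfl⟩ | ⟨b, rfl⟩ | ⟨b, rfl⟩ <;> simp only [code] at h
  · rw [Sum.inl.inj h]
  · cases h
  · cases h
  · cases h
  · have : a = b := Fin.ext (Sum.inl.inj (Sum.inr.inj h))
    rw [this]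
  · cases Sum.inr.inj h
  · cases h
  · cases Sum.inr.inj h
  · have : a = b := Fin.ext (Sum.inr.inj (Sum.inr.inj h))
    rw [this]

def gmap (r : ℕ) : Fin 2 ⊕ (ℕ ⊕ ℕ) → Fin 4 × Option ℕ
  | Sum.inl p => (0, some ((p : ℕ) + 3))
  | Sum.inr (Sum.inl i) =>
    if i / 4 = r then
      if i % 4 = 0 then (0, some 0) else if i % 4 = 1 then (3, none)
      else if i % 4 = 2 then (1, none) else (2, some 0)
    else if i % 4 < 2 then (0, some (i + 1)) else (2, some (i + 1))
  | Sum.inr (Sum.inr i) =>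
    if i / 4 = r then
      if i % 4 = 0 then (2, none) else if i % 4 = 1 then (1, some 0)
      else if i % 4 = 2 then (3, some 0) else (0, none)
    else if i % 2 = 0 then (3, some (i + 1)) else (1, some (i + 1))

lemma gmap_inj (r : ℕ) : Function.Injective (gmap r) := by
  rintro (p | i | i) (q | j | j) h <;> simp only [gmap] at h
  · have : p = q := Fin.ext (by simpa using h)
    rw [this]
  · have := p.2
    split_ifs at h <;> simp at h <;> omega
  · have := p.2
    split_ifs at h <;> simp at h
  · have := q.2
    split_ifs at h <;> simp at h <;> omega
  · have : i = j := by
      split_ifs at h <;> simp at h <;> omega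
    rw [this]
  · split_ifs at h <;> simp at h
  · have := q.2
    split_ifs at h <;> simp at h
  · split_ifs at h <;> simp at h
  · have : i = j := by
      split_ifs at h <;> simp at h <;> omega
    rw [this]

lemma RingR.B' {k k' : Fin 4} (h : k' = k + 1) : RingR (k, none) (k', none) := h ▸ RingR.B k
lemma RingR.C' {k k' : Fin 4} {m : ℕ} (h : k' = k + 1) : RingR (k', some 0) (k, some m) :=
  h ▸ RingR.C k m

def GAdj (r i j : ℕ) : Prop :=
  RingR (gmap r (Sum.inr (Sum.inl i))) (gmap r (Sum.inr (Sum.inr j))) ∨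
  RingR (gmap r (Sum.inr (Sum.inr j))) (gmap r (Sum.inr (Sum.inl i)))

lemma cover {i j : ℕ} (h : i ≠ j) : GAdj (i / 4) i j ∨ GAdj (j / 4) i j := by
  have hi : i % 4 = 0 ∨ i % 4 = 1 ∨ i % 4 = 2 ∨ i % 4 = 3 := by omega
  have hj : (j % 4 = 0 ∧ j % 2 = 0) ∨ (j % 4 = 1 ∧ j % 2 = 1) ∨ (j % 4 = 2 ∧ j % 2 = 0) ∨
    (j % 4 = 3 ∧ j % 2 = 1) := by omega
  by_cases hb : j / 4 = i / 4
  · left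
    have : i % 4 ≠ j % 4 := by omega
    unfold GAdj
    rcases hi with hi | hi | hi | hi <;> rcases hj with ⟨hj, _⟩ | ⟨hj, _⟩ | ⟨hj, _⟩ | ⟨hj, _⟩ <;>
      first
      | omega
      | (simp only [gmap, hb, hi, hj, if_true]
         norm_num
         first
         | exact Or.inl (RingR.A _ _)
         | exact Or.inr (RingR.A _ _)
         | exact Or.inl (RingR.B' (by decide))
         | exact Or.inr (RingR.B' (by decide))
         | exact Or.inl (RingR.C' (by decide))
         | exact Or.inr (RingR.C' (by decide)))
  · have hb' : ¬ i / 4 = j / 4 := fun h => hb h.symm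
    unfold GAdj
    rcases hi with hi | hi | hi | hi <;> rcases hj with ⟨hj, h2⟩ | ⟨hj, h2⟩ | ⟨hj, h2⟩ | ⟨hj, h2⟩ <;>
      first
      | (left
         simp only [gmap, hb, hi, hj, h2, if_true, if_false]
         norm_num
         first
         | exact Or.inl (RingR.A _ _)
         | exact Or.inr (RingR.A _ _)
         | exact Or.inl (RingR.C' (by decide))
         | exact Or.inr (RingR.C' (by decide)))
      | (right
         simp only [gmap, hb', hi, hj, h2, if_true, if_false]
         norm_num
         first
         | exact Or.inl (RingR.A _ _)
         | exact Or.inr (RingR.A _ _)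
         | exact Or.inl (RingR.C' (by decide))
         | exact Or.inr (RingR.C' (by decide)))

def bmap : Fin 2 ⊕ (ℕ ⊕ ℕ) → Fin 2 ⊕ ℕ
  | Sum.inl p => Sum.inl p
  | Sum.inr (Sum.inl i) => Sum.inr (2 * i)
  | Sum.inr (Sum.inr i) => Sum.inr (2 * i + 1)

lemma bmap_inj : Function.Injective bmap := by
  rintro (p | i | i) (q | j | j) h <;> simp [bmap] at h ⊢ <;> omega

def piece (n p i : ℕ) : SimpleGraph (KV n) :=
  if i < p then (SimpleGraph.fromRel RingR).comap (gmap i ∘ code n)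
  else (SimpleGraph.fromRel BookR).comap (bmap ∘ code n)

lemma piece_planar (n p i : ℕ) : IsPlanar (piece n p i) := by
  unfold piece
  split_ifs
  · exact ring_planar.of_hom _ ((gmap_inj i).comp (code_inj n)) fun a b h => h
  · exact book_planar.of_hom _ (bmap_inj.comp (code_inj n)) fun a b h => h

lemma piece_cover {n p : ℕ} (hp : n ≤ 4 * p) (v w : KV n) (h : v.1 ≠ w.1) :
    ∃ i : Fin (p + 1), (piece n p i).Adj v w := by
  have hne : v ≠ w := fun e => h (by rw [e])
  have hbook : ∀ {v w : KV n}, v ≠ w → BookR (bmap (code n v)) (bmap (code n w)) →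
      ∃ i : Fin (p + 1), (piece n p i).Adj v w := by
    intro v w hne h
    refine ⟨Fin.last p, ?_⟩
    simp only [piece, Fin.val_last, lt_irrefl, if_false]
    exact ⟨fun e => hne ((bmap_inj.comp (code_inj n)) e), Or.inl h⟩
  have hsymm : ∀ {v w : KV n}, (∃ i : Fin (p + 1), (piece n p i).Adj v w) →
      ∃ i : Fin (p + 1), (piece n p i).Adj w v := fun ⟨i, hi⟩ => ⟨i, hi.symm⟩
  have hmain : ∀ a b : Fin n, ∃ i : Fin (p + 1), (piece n p i).Adj ⟨1, a⟩ ⟨2, b⟩ := by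
    intro a b
    have hne : (⟨1, a⟩ : KV n) ≠ ⟨2, b⟩ := fun e => absurd (congrArg Sigma.fst e) (by decide : (1 : Fin 3) ≠ 2)
    by_cases hab : (a : ℕ) = b
    · apply hbook hne
      simp only [code, bmap]
      rw [show (show Fin n from a).val = (show Fin n from b).val from hab]
      exact BookR.page _
    · have key : ∀ r, r < p → GAdj r a b →
          ∃ i : Fin (p + 1), (piece n p i).Adj ⟨1, a⟩ ⟨2, b⟩ := by
        intro r hr h
        refine ⟨⟨r, by omega⟩, ?_⟩
        simp only [piece, hr, if_true]
        exact ⟨fun e => hne (((gmap_inj r).comp (code_inj n)) e), h⟩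
      rcases cover hab with h | h
      · exact key _ (by have := a.2; omega) h
      · exact key _ (by have := b.2; omega) h
  rcases kv_cases v with ⟨a, rfl⟩ | ⟨a, rfl⟩ | ⟨a, rfl⟩ <;>
  rcases kv_cases w with ⟨b, rfl⟩ | ⟨b, rfl⟩ | ⟨b, rfl⟩
  · exact absurd rfl h
  · exact hbook hne (BookR.pole _ _)
  · exact hbook hne (BookR.pole _ _)
  · exact hsymm (hbook hne.symm (BookR.pole _ _))
  · exact absurd rfl h
  · exact hmain a b
  · exact hsymm (hbook hne.symm (BookR.pole _ _))
  · exact hsymm (hmain b a)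
  · exact absurd rfl h

lemma upper_bound {n p : ℕ} (hp : n ≤ 4 * p) : ∃ H : Fin (p + 1) → SimpleGraph (KV n),
    (∀ i, H i ≤ KK n) ∧ (∀ i, IsPlanar (H i)) ∧ (⨆ i, H i) = KK n := by
  have h1 : ∀ i : Fin (p + 1), KK n ⊓ piece n p i ≤ KK n := fun i => inf_le_left
  refine ⟨fun i => KK n ⊓ piece n p i, h1, ?_, le_antisymm (iSup_le h1) ?_⟩
  · intro i
    exact (piece_planar n p i).of_hom id Function.injective_id fun a b h => h.2
  · intro v w h
    obtain ⟨i, hi⟩ := piece_cover hp v w h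
    rw [iSup_adj]
    exact ⟨i, h, hi⟩

theorem thickness_K2nn_of_mod (n : ℕ) (hn : 1 ≤ n) (h : n % 4 = 0 ∨ n % 4 = 3) :
    (thickness (completeMultipartiteGraph ![Fin 2, Fin n, Fin n]) : ℤ) = ⌈((n : ℚ) + 2) / 4⌉ := by
  obtain ⟨p, hp, hlow⟩ : ∃ p : ℕ, (n = 4 * p ∨ n + 1 = 4 * p) ∧ 1 ≤ p := by
    rcases h with h | h
    · exact ⟨n / 4, by omega, by omega⟩
    · exact ⟨n / 4 + 1, by omega, by omega⟩
  have hth : thickness (completeMultipartiteGraph ![Fin 2, Fin n, Fin n]) = p + 1 := by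
    have hup := upper_bound (n := n) (p := p) (by omega)
    refine le_antisymm (Nat.sInf_le hup) (le_csInf ⟨p + 1, hup⟩ ?_)
    rintro t ⟨H, -, h2, h3⟩
    have hb := lower_bound (by omega) H h2 h3
    by_contra hlt
    have htp : t ≤ p := by omega
    have h5 : n * n ≤ p * (4 * n - 4) := hb.trans (Nat.mul_le_mul_right _ htp)
    obtain ⟨m, rfl⟩ : ∃ m, n = m + 1 := ⟨n - 1, by omega⟩
    have h6 : 4 * (m + 1) - 4 = 4 * m := by omega
    rw [h6] at h5
    rcases hp with hp | hp
    · have : p * (4 * m) = (m + 1) * m := by rw [hp]; ring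
      nlinarith
    · have : p * (4 * m) = (m + 1 + 1) * m := by rw [hp]; ring
      nlinarith
  rw [hth]
  symm
  rw [Int.ceil_eq_iff]
  rcases hp with hp | hp
  · have : (n : ℚ) = 4 * p := by exact_mod_cast hp
    rw [this]; push_cast
    constructor <;> linarith
  · have : (n : ℚ) + 1 = 4 * p := by exact_mod_cast hp
    push_cast
    constructor <;> linarith
end

section
/- For every p ≥ 0 there exists a decomposition of the complete tripartite graph K_{1,4p+2,4p+2} into p+1 planar subgraphs; in particular θ(K_{1,4p+2,4p+2}) ≤ p+1. -/
open SimpleGraph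

/-- Two-page book embeddings give planar drawings. -/
lemma isPlanar_of_book {V : Type*} (G : SimpleGraph V) (pos : V → ℝ)
    (hpos : Function.Injective pos) (page : V → V → Prop)
    (hx : ∀ a b c d, G.Adj a b → G.Adj c d → pos a < pos c → pos c < pos b → pos b < pos d →
      (page a b ↔ page c d) → False) : IsPlanar G := by
  classical
  have key : ∀ e : G.edgeSet, ∃ u v : V, (e : Sym2 V) = s(u, v) ∧ G.Adj u v ∧ pos u < pos v := by
    rintro ⟨e, he⟩
    induction e using Sym2.ind with
    | _ u v =>
      have hadj : G.Adj u v := he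
      have hne : pos u ≠ pos v := fun h => hadj.ne (hpos h)
      rcases lt_or_gt_of_ne hne with h | h
      · exact ⟨u, v, rfl, hadj, h⟩
      · exact ⟨v, u, Sym2.eq_swap, hadj.symm, h⟩
  choose P Q hPQ hadj hlt using key
  let ε : G.edgeSet → ℝ := fun e => if page (P e) (Q e) then 1 else -1
  have hε : ∀ e, ε e = 1 ∨ ε e = -1 := by
    intro e
    by_cases h : page (P e) (Q e) <;> simp [ε, h]
  let X : G.edgeSet → ℝ → ℝ := fun e t => pos (P e) + (pos (Q e) - pos (P e)) * t
  have hXinj : ∀ e s t, X e s = X e t → s = t := by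
    intro e s t h
    have h0 : pos (Q e) - pos (P e) ≠ 0 := by linarith [hlt e] |> fun (h : 0 < pos (Q e) - pos (P e)) => h.ne'
    have : (pos (Q e) - pos (P e)) * s = (pos (Q e) - pos (P e)) * t := by
      simp only [X] at h; linarith
    exact mul_left_cancel₀ h0 this
  have hX0 : ∀ e, X e 0 = pos (P e) := by intro e; simp [X]
  have hX1 : ∀ e, X e 1 = pos (Q e) := by intro e; simp [X]
  have hXl : ∀ e (t : ℝ), 0 ≤ t → t ≠ 0 → pos (P e) < X e t := by
    intro e t h h'
    have : 0 < t := lt_of_le_of_ne h (Ne.symm h')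
    have := mul_pos (sub_pos.2 (hlt e)) this
    simp only [X]; linarith
  have hXr : ∀ e (t : ℝ), t ≤ 1 → t ≠ 1 → X e t < pos (Q e) := by
    intro e t h h'
    have : 0 < 1 - t := sub_pos.2 (lt_of_le_of_ne h h')
    have := mul_pos (sub_pos.2 (hlt e)) this
    simp only [X]; nlinarith
  let γ : G.edgeSet → (Set.Icc (0:ℝ) 1 → ℝ × ℝ) := fun e t =>
    (X e t, ε e * ((X e t - pos (P e)) * (pos (Q e) - X e t)))
  refine ⟨fun v => (pos v, 0), γ, ?_, ?_, ?_, ?_, ?_, ?_⟩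
  · intro a b h
    exact hpos (Prod.ext_iff.1 h).1
  · intro e
    simp only [γ, X]
    fun_prop
  · intro e
    refine ⟨P e, Q e, hPQ e, ?_, ?_⟩
    · simp [γ, hX0]
    · simp [γ, hX1]
  · intro e s t h
    exact Subtype.ext (hXinj e _ _ (Prod.ext_iff.1 h).1)
  · intro e t h0 h1 v h
    have h2 := (Prod.ext_iff.1 h).2
    have a1 := sub_pos.2 (hXl e t t.2.1 h0)
    have a2 := sub_pos.2 (hXr e t t.2.2 h1)
    have a3 := mul_pos a1 a2
    simp only [γ] at h2
    rcases hε e with q | q <;> rw [q] at h2 <;> linarith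
  · intro e e' hne s t h
    by_cases s0 : (s : ℝ) = 0
    · exact ⟨P e, by simp [γ, s0, hX0]⟩
    by_cases s1 : (s : ℝ) = 1
    · exact ⟨Q e, by simp [γ, s1, hX1]⟩
    by_cases t0 : (t : ℝ) = 0
    · exact ⟨P e', by rw [h]; simp [γ, t0, hX0]⟩
    by_cases t1 : (t : ℝ) = 1
    · exact ⟨Q e', by rw [h]; simp [γ, t1, hX1]⟩
    exfalso
    have h1 := (Prod.ext_iff.1 h).1
    have h2 := (Prod.ext_iff.1 h).2
    simp only [γ] at h1 h2
    have a1 := hXl e s s.2.1 s0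
    have a2 := hXr e s s.2.2 s1
    have b1 := hXl e' t t.2.1 t0
    have b2 := hXr e' t t.2.2 t1
    rw [← h1] at h2 b1 b2
    have a3 := mul_pos (sub_pos.2 a1) (sub_pos.2 a2)
    have b3 := mul_pos (sub_pos.2 b1) (sub_pos.2 b2)
    have hpg : page (P e) (Q e) ↔ page (P e') (Q e') := by
      by_contra hc
      by_cases q : page (P e) (Q e) <;> by_cases q' : page (P e') (Q e') <;>
        simp only [q, q', ε, if_true, if_false] at h2 hc
      · exact hc trivial
      · linarith
      · linarith
      · exact hc trivial
    have heq : (X e s - pos (P e)) * (pos (Q e) - X e s) =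
        (X e s - pos (P e')) * (pos (Q e') - X e s) := by
      simp only [ε, hpg] at h2
      by_cases q : page (P e') (Q e') <;> simp only [q, if_true, if_false] at h2 <;> linarith
    rcases lt_trichotomy (pos (P e)) (pos (P e')) with c | c | c
    · rcases lt_or_ge (pos (Q e)) (pos (Q e')) with d | d
      · exact hx _ _ _ _ (hadj e) (hadj e') c (by linarith) d hpg
      · nlinarith
    · rw [c] at heq
      have := mul_left_cancel₀ (sub_pos.2 b1).ne' heq
      have hq : pos (Q e) = pos (Q e') := by linarith
      apply hne
      apply Subtype.ext
      rw [hPQ e, hPQ e', hpos c, hpos hq]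
    · rcases lt_or_ge (pos (Q e')) (pos (Q e)) with d | d
      · exact hx _ _ _ _ (hadj e') (hadj e) c (by linarith) d hpg.symm
      · nlinarith

/-- A version with natural number positions and explicit noncrossing relations. -/
lemma isPlanar_of_rel {V : Type*} (G : SimpleGraph V) (pos : V → ℕ)
    (hpos : Function.Injective pos) (T B : ℕ → ℕ → Prop)
    (hT : ∀ a b c d, T a b → T c d → a < c → c < b → b < d → False)
    (hB : ∀ a b c d, B a b → B c d → a < c → c < b → b < d → False)
    (h : ∀ a b, G.Adj a b → pos a < pos b → T (pos a) (pos b) ∨ B (pos a) (pos b)) :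
    IsPlanar G := by
  refine isPlanar_of_book G (fun v => (pos v : ℝ)) (Nat.cast_injective.comp hpos)
    (fun a b => T (pos a) (pos b)) ?_
  intro a b c d hab hcd h1 h2 h3 hiff
  have h1 : pos a < pos c := by exact_mod_cast h1
  have h2 : pos c < pos b := by exact_mod_cast h2
  have h3 : pos b < pos d := by exact_mod_cast h3
  have q1 := h a b hab (by omega)
  have q2 := h c d hcd (by omega)
  by_cases t : T (pos a) (pos b)
  · exact hT _ _ _ _ t (hiff.1 t) h1 h2 h3
  · exact hB _ _ _ _ (q1.resolve_left t) (q2.resolve_left (fun t' => t (hiff.2 t'))) h1 h2 h3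

/-- The graph of edges of `K` realised by `T` or `B`. -/
def relGraph {V : Type*} (K : SimpleGraph V) (pos : V → ℕ) (R : ℕ → ℕ → Prop) :
    SimpleGraph V where
  Adj a b := K.Adj a b ∧ (R (pos a) (pos b) ∨ R (pos b) (pos a))
  symm := ⟨fun _ _ h => ⟨h.1.symm, h.2.symm⟩⟩
  loopless := ⟨fun _ h => h.1.ne rfl⟩

lemma relGraph_planar {V : Type*} (K : SimpleGraph V) (pos : V → ℕ)
    (hpos : Function.Injective pos) (T B : ℕ → ℕ → Prop)
    (hT : ∀ a b c d, T a b → T c d → a < c → c < b → b < d → False)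
    (hB : ∀ a b c d, B a b → B c d → a < c → c < b → b < d → False)
    (hlt : ∀ a b, T a b ∨ B a b → a < b) :
    IsPlanar (relGraph K pos (fun a b => T a b ∨ B a b)) := by
  refine isPlanar_of_rel _ pos hpos T B hT hB ?_
  rintro a b ⟨_, h | h⟩ hl
  · exact h
  · exact absurd (hlt _ _ h) (by omega)

/-! ### The first `p` layers -/

/-- slot and index in layer `r`; kind `0` is the hub, `1` is `U`, otherwise `V`. -/
def slotR (p r : ℕ) : ℕ → ℕ → ℕ
  | 0, _ => 9
  | 1, k => if k / 4 = r then
      (if k % 4 = 0 then 0 else if k % 4 = 1 then 4 else if k % 4 = 2 then 10 else 8)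
      else if k = 4 * p + 1 then 12 else if k % 4 < 2 then 6 else 12
  | _, k => if k / 4 = r then
      (if k % 4 = 0 then 11 else if k % 4 = 1 then 13 else if k % 4 = 2 then 5 else 7)
      else if k = 4 * p then 1 else if k = 4 * p + 1 then 3 else if k % 4 < 2 then 2 else 9

def fatS (s : ℕ) : Prop := s = 2 ∨ s = 6 ∨ s = 9 ∨ s = 12

instance (s : ℕ) : Decidable (fatS s) := by unfold fatS; infer_instance

def idxR (p r : ℕ) (c k : ℕ) : ℕ :=
  if fatS (slotR p r c k) then (if c = 0 then 4 * p + 2 else k) else 0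

def posR (p r : ℕ) (c k : ℕ) : ℕ := slotR p r c k * (4 * p + 3) + idxR p r c k

def topL : List (ℕ × ℕ) :=
  [(0,1),(1,4),(1,8),(1,10),(2,4),(5,6),(5,8),(4,5),(9,10),(0,11),(10,11),(11,12),(7,8)]

def botL : List (ℕ × ℕ) :=
  [(0,2),(0,3),(3,4),(3,8),(3,10),(6,7),(4,7),(8,9),(12,13),(10,13),(0,13)]

def inSlot (M s m : ℕ) : Prop := s * M ≤ m ∧ m < s * M + M ∧ (¬ fatS s → m = s * M)

def relL (M : ℕ) (L : List (ℕ × ℕ)) (m n : ℕ) : Prop :=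
  ∃ e ∈ L, inSlot M e.1 m ∧ inSlot M e.2 n

lemma slot_le {M s t m n : ℕ} (h1 : inSlot M s m) (h2 : inSlot M t n) (h : m < n) :
    s < t ∨ (s = t ∧ fatS s) := by
  obtain ⟨a, b, c⟩ := h1
  obtain ⟨d, e, f⟩ := h2
  rcases lt_trichotomy s t with q | q | q
  · exact Or.inl q
  · subst q
    refine Or.inr ⟨rfl, ?_⟩
    by_contra hf
    have := c hf
    have := f hf
    omega
  · exfalso
    have : (t + 1) * M ≤ s * M := Nat.mul_le_mul_right _ q
    rw [Nat.add_mul] at this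
    omega

lemma relL_noncross (M : ℕ) (L : List (ℕ × ℕ))
    (hL : ∀ e ∈ L, ∀ f ∈ L, (e.1 < f.1 ∨ (e.1 = f.1 ∧ fatS e.1)) →
      (f.1 < e.2 ∨ (f.1 = e.2 ∧ fatS f.1)) → (e.2 < f.2 ∨ (e.2 = f.2 ∧ fatS e.2)) → False) :
    ∀ a b c d, relL M L a b → relL M L c d → a < c → c < b → b < d → False := by
  rintro a b c d ⟨e, he, h1, h2⟩ ⟨f, hf, h3, h4⟩ q1 q2 q3
  exact hL e he f hf (slot_le h1 h3 q1) (slot_le h3 h2 q2) (slot_le h2 h4 q3)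

lemma relL_lt (M : ℕ) (hM : 0 < M) (L : List (ℕ × ℕ)) (hL : ∀ e ∈ L, e.1 < e.2) (a b : ℕ)
    (h : relL M L a b) : a < b := by
  obtain ⟨e, he, h1, h2⟩ := h
  have := hL e he
  have q : (e.1 + 1) * M ≤ e.2 * M := Nat.mul_le_mul_right _ this
  rw [Nat.add_mul] at q
  have := h1.2.1
  have := h2.1
  omega

/-- Admissible codes. -/
def okC (p c k : ℕ) : Prop := (c = 0 ∧ k = 0) ∨ (c = 1 ∧ k < 4 * p + 2) ∨ (c = 2 ∧ k < 4 * p + 2)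

lemma inSlot_posR (p r c k : ℕ) (h : okC p c k) :
    inSlot (4 * p + 3) (slotR p r c k) (posR p r c k) := by
  have hi : idxR p r c k < 4 * p + 3 := by
    unfold idxR
    rcases h with h | h | h <;> split_ifs <;> omega
  refine ⟨by unfold posR; omega, by unfold posR; omega, ?_⟩
  intro hf
  simp [posR, idxR, hf]

lemma descU (p r k : ℕ) (h : k < 4 * p + 2) :
    (k = 4 * r ∧ slotR p r 1 k = 0) ∨ (k = 4 * r + 1 ∧ slotR p r 1 k = 4) ∨
    (k = 4 * r + 2 ∧ slotR p r 1 k = 10) ∨ (k = 4 * r + 3 ∧ slotR p r 1 k = 8) ∨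
    (slotR p r 1 k = 6 ∧ idxR p r 1 k = k) ∨ (slotR p r 1 k = 12 ∧ idxR p r 1 k = k) := by
  have hs : (k = 4 * r ∧ slotR p r 1 k = 0) ∨ (k = 4 * r + 1 ∧ slotR p r 1 k = 4) ∨ (k = 4 * r + 2 ∧ slotR p r 1 k = 10) ∨ (k = 4 * r + 3 ∧ slotR p r 1 k = 8) ∨
      slotR p r 1 k = 6 ∨ slotR p r 1 k = 12 := by
    simp only [slotR]
    split_ifs <;> omega
  have h6 : slotR p r 1 k = 6 → idxR p r 1 k = k := by
    intro e
    simp [idxR, e, fatS]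
  have h12 : slotR p r 1 k = 12 → idxR p r 1 k = k := by
    intro e
    simp [idxR, e, fatS]
  exact (Or.imp_right (Or.imp_right (Or.imp_right (Or.imp_right (Or.imp (fun e => ⟨e, h6 e⟩) (fun e => ⟨e, h12 e⟩)))))) hs

lemma descV (p r k : ℕ) (h : k < 4 * p + 2) :
    (k = 4 * r ∧ slotR p r 2 k = 11) ∨ (k = 4 * r + 1 ∧ slotR p r 2 k = 13) ∨
    (k = 4 * r + 2 ∧ slotR p r 2 k = 5) ∨ (k = 4 * r + 3 ∧ slotR p r 2 k = 7) ∨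
    (k = 4 * p ∧ slotR p r 2 k = 1) ∨ (k = 4 * p + 1 ∧ slotR p r 2 k = 3) ∨
    (slotR p r 2 k = 2 ∧ idxR p r 2 k = k) ∨ (slotR p r 2 k = 9 ∧ idxR p r 2 k = k) := by
  have hs : (k = 4 * r ∧ slotR p r 2 k = 11) ∨ (k = 4 * r + 1 ∧ slotR p r 2 k = 13) ∨ (k = 4 * r + 2 ∧ slotR p r 2 k = 5) ∨ (k = 4 * r + 3 ∧ slotR p r 2 k = 7) ∨ (k = 4 * p ∧ slotR p r 2 k = 1) ∨ (k = 4 * p + 1 ∧ slotR p r 2 k = 3) ∨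
      slotR p r 2 k = 2 ∨ slotR p r 2 k = 9 := by
    simp only [slotR]
    split_ifs <;> omega
  have h2 : slotR p r 2 k = 2 → idxR p r 2 k = k := by
    intro e
    simp [idxR, e, fatS]
  have h9 : slotR p r 2 k = 9 → idxR p r 2 k = k := by
    intro e
    simp [idxR, e, fatS]
  exact (Or.imp_right (Or.imp_right (Or.imp_right (Or.imp_right (Or.imp_right (Or.imp_right (Or.imp (fun e => ⟨e, h2 e⟩) (fun e => ⟨e, h9 e⟩)))))))) hs

lemma descH (p r k : ℕ) : slotR p r 0 k = 9 ∧ idxR p r 0 k = 4 * p + 2 := by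
  simp [idxR, fatS, slotR]

lemma posR_inj (p r c k c' k' : ℕ) (h : okC p c k) (h' : okC p c' k')
    (e : posR p r c k = posR p r c' k') : c = c' ∧ k = k' := by
  have hi := inSlot_posR p r c k h
  have hi' := inSlot_posR p r c' k' h'
  have hs : slotR p r c k = slotR p r c' k' := by
    rcases lt_trichotomy (slotR p r c k) (slotR p r c' k') with q | q | q
    · have := relL_lt (4 * p + 3) (by omega) [(slotR p r c k, slotR p r c' k')] (by simpa using q)
        _ _ ⟨(slotR p r c k, slotR p r c' k'), by simp, hi, hi'⟩
      omega
    · exact q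
    · have := relL_lt (4 * p + 3) (by omega) [(slotR p r c' k', slotR p r c k)] (by simpa using q)
        _ _ ⟨(slotR p r c' k', slotR p r c k), by simp, hi', hi⟩
      omega
  have hx : idxR p r c k = idxR p r c' k' := by
    unfold posR at e; rw [hs] at e; omega
  rcases h with ⟨rfl, h⟩ | ⟨rfl, h⟩ | ⟨rfl, h⟩ <;> rcases h' with ⟨rfl, h'⟩ | ⟨rfl, h'⟩ | ⟨rfl, h'⟩
  · omega
  · have := descH p r k
    have := descU p r k' h'
    omega
  · have := descH p r k
    have := descV p r k' h'
    omega
  · have := descH p r k'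
    have := descU p r k h
    omega
  · have := descU p r k' h'
    have := descU p r k h
    omega
  · have := descV p r k' h'
    have := descU p r k h
    omega
  · have := descH p r k'
    have := descV p r k h
    omega
  · have := descU p r k' h'
    have := descV p r k h
    omega
  · have := descV p r k' h'
    have := descV p r k h
    omega

/-! ### The last layer -/

def posZ (p : ℕ) : ℕ → ℕ → ℕ
  | 0, _ => 3 * (4 * p + 1)
  | 1, k => if k = 4 * p then 4 * p + 1 else if k = 4 * p + 1 then 5 * (4 * p + 1) else
      if k % 4 = 0 then 4 * (4 * p + 1) + 4 * (k / 4) + 2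
      else if k % 4 = 1 then 2 * (4 * p + 1) + 4 * (k / 4) + 2
      else if k % 4 = 2 then 4 * (4 * p + 1) + 4 * (k / 4) + 3
      else 2 * (4 * p + 1) + 4 * (k / 4) + 3
  | _, k => if k = 4 * p then 0 else if k = 4 * p + 1 then 6 * (4 * p + 1) else
      if k % 4 = 0 then 2 * (4 * p + 1) + 4 * (k / 4) + 1
      else if k % 4 = 1 then 2 * (4 * p + 1) + 4 * (k / 4) + 4
      else if k % 4 = 2 then 4 * (4 * p + 1) + 4 * (k / 4) + 1
      else 4 * (4 * p + 1) + 4 * (k / 4) + 4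


lemma posZ_inj (p c k c' k' : ℕ) (h : okC p c k) (h' : okC p c' k')
    (e : posZ p c k = posZ p c' k') : c = c' ∧ k = k' := by
  rcases h with ⟨rfl, h⟩ | ⟨rfl, h⟩ | ⟨rfl, h⟩ <;> rcases h' with ⟨rfl, h'⟩ | ⟨rfl, h'⟩ | ⟨rfl, h'⟩ <;>
    simp only [posZ] at e <;> (try split_ifs at e) <;> omega

def TopZ (p m n : ℕ) : Prop :=
  (m = 0 ∧ n = 4 * p + 1) ∨ (m = 4 * p + 1 ∧ n = 6 * (4 * p + 1)) ∨
  (m = 3 * (4 * p + 1) ∧ n = 6 * (4 * p + 1)) ∨ (m = 4 * p + 1 ∧ n = 3 * (4 * p + 1)) ∨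
  (m = 5 * (4 * p + 1) ∧ n = 6 * (4 * p + 1)) ∨
  ∃ q < p, (m = 4 * p + 1 ∧ n = 2 * (4 * p + 1) + 4 * q + 1) ∨
    (m = 4 * p + 1 ∧ n = 2 * (4 * p + 1) + 4 * q + 4) ∨
    (m = 2 * (4 * p + 1) + 4 * q + 1 ∧ n = 2 * (4 * p + 1) + 4 * q + 2) ∨
    (m = 2 * (4 * p + 1) + 4 * q + 1 ∧ n = 2 * (4 * p + 1) + 4 * q + 3) ∨
    (m = 2 * (4 * p + 1) + 4 * q + 3 ∧ n = 2 * (4 * p + 1) + 4 * q + 4) ∨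
    (m = 4 * (4 * p + 1) + 4 * q + 1 ∧ n = 5 * (4 * p + 1)) ∨
    (m = 4 * (4 * p + 1) + 4 * q + 4 ∧ n = 5 * (4 * p + 1)) ∨
    (m = 4 * (4 * p + 1) + 4 * q + 1 ∧ n = 4 * (4 * p + 1) + 4 * q + 2) ∨
    (m = 4 * (4 * p + 1) + 4 * q + 1 ∧ n = 4 * (4 * p + 1) + 4 * q + 3) ∨
    (m = 4 * (4 * p + 1) + 4 * q + 3 ∧ n = 4 * (4 * p + 1) + 4 * q + 4)

def BotZ (p m n : ℕ) : Prop :=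
  (m = 0 ∧ n = 3 * (4 * p + 1)) ∨ (m = 0 ∧ n = 5 * (4 * p + 1)) ∨
  (m = 3 * (4 * p + 1) ∧ n = 5 * (4 * p + 1)) ∨
  ∃ q < p, (m = 2 * (4 * p + 1) + 4 * q + 1 ∧ n = 3 * (4 * p + 1)) ∨
    (m = 2 * (4 * p + 1) + 4 * q + 4 ∧ n = 3 * (4 * p + 1)) ∨
    (m = 2 * (4 * p + 1) + 4 * q + 2 ∧ n = 3 * (4 * p + 1)) ∨
    (m = 2 * (4 * p + 1) + 4 * q + 2 ∧ n = 2 * (4 * p + 1) + 4 * q + 4) ∨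
    (m = 3 * (4 * p + 1) ∧ n = 4 * (4 * p + 1) + 4 * q + 1) ∨
    (m = 3 * (4 * p + 1) ∧ n = 4 * (4 * p + 1) + 4 * q + 4) ∨
    (m = 3 * (4 * p + 1) ∧ n = 4 * (4 * p + 1) + 4 * q + 2) ∨
    (m = 4 * (4 * p + 1) + 4 * q + 2 ∧ n = 4 * (4 * p + 1) + 4 * q + 4)

set_option maxHeartbeats 4000000 in
lemma TopZ_noncross (p : ℕ) :
    ∀ a b c d, TopZ p a b → TopZ p c d → a < c → c < b → b < d → False := by
  intro a b c d h1 h2 q1 q2 q3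
  rcases h1 with h | h | h | h | h | ⟨q, hq, h | h | h | h | h | h | h | h | h | h⟩ <;>
  rcases h2 with h' | h' | h' | h' | h' |
    ⟨q', hq', h' | h' | h' | h' | h' | h' | h' | h' | h' | h'⟩ <;> omega

set_option maxHeartbeats 4000000 in
lemma BotZ_noncross (p : ℕ) :
    ∀ a b c d, BotZ p a b → BotZ p c d → a < c → c < b → b < d → False := by
  intro a b c d h1 h2 q1 q2 q3
  rcases h1 with h | h | h | ⟨q, hq, h | h | h | h | h | h | h | h⟩ <;>
  rcases h2 with h' | h' | h' | ⟨q', hq', h' | h' | h' | h' | h' | h' | h' | h'⟩ <;> omega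

lemma Z_lt (p : ℕ) : ∀ a b, TopZ p a b ∨ BotZ p a b → a < b := by
  rintro a b ((h | h | h | h | h | ⟨q, hq, h⟩) | (h | h | h | ⟨q, hq, h⟩)) <;> omega

/-! ### Covering -/

def RelR (p : ℕ) (a b : ℕ) : Prop := relL (4 * p + 3) topL a b ∨ relL (4 * p + 3) botL a b

def RelZ (p : ℕ) (a b : ℕ) : Prop := TopZ p a b ∨ BotZ p a b

def covR (p r c k c' k' : ℕ) : Prop :=
  RelR p (posR p r c k) (posR p r c' k') ∨ RelR p (posR p r c' k') (posR p r c k)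

def covZ (p c k c' k' : ℕ) : Prop :=
  RelZ p (posZ p c k) (posZ p c' k') ∨ RelZ p (posZ p c' k') (posZ p c k)

lemma covR_of (p r c k c' k' : ℕ) (h : okC p c k) (h' : okC p c' k')
    (hm : (slotR p r c k, slotR p r c' k') ∈ topL ++ botL ∨
      (slotR p r c' k', slotR p r c k) ∈ topL ++ botL) : covR p r c k c' k' := by
  have hi := inSlot_posR p r c k h
  have hi' := inSlot_posR p r c' k' h'
  rcases hm with hm | hm
  · rcases List.mem_append.1 hm with hm | hm
    · exact Or.inl (Or.inl ⟨_, hm, hi, hi'⟩)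
    · exact Or.inl (Or.inr ⟨_, hm, hi, hi'⟩)
  · rcases List.mem_append.1 hm with hm | hm
    · exact Or.inr (Or.inl ⟨_, hm, hi', hi⟩)
    · exact Or.inr (Or.inr ⟨_, hm, hi', hi⟩)

lemma covUV_in (p r k l : ℕ) (hr : r < p) (hk : k < 4 * p + 2) (hl : l < 4 * p + 2)
    (h1 : k / 4 = r) (h2 : l / 4 = r) (h : k % 2 = 0 ↔ l % 4 < 2) : covR p r 1 k 2 l := by
  apply covR_of p r 1 k 2 l (Or.inr (Or.inl ⟨rfl, hk⟩)) (Or.inr (Or.inr ⟨rfl, hl⟩))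
  simp only [slotR]
  split_ifs <;> first | decide | (exfalso; omega)

lemma covUV_y (p r k l : ℕ) (hr : r < p) (hk : k < 4 * p + 2) (hl : l < 4 * p + 2)
    (h1 : k / 4 = r) (h2 : 4 * p ≤ l) : covR p r 1 k 2 l := by
  apply covR_of p r 1 k 2 l (Or.inr (Or.inl ⟨rfl, hk⟩)) (Or.inr (Or.inr ⟨rfl, hl⟩))
  simp only [slotR]
  split_ifs <;> first | decide | (exfalso; omega)

lemma covUV_u (p r k l : ℕ) (hr : r < p) (hk : k < 4 * p + 2) (hl : l < 4 * p)
    (h1 : k / 4 = r) (h2 : l / 4 ≠ r) (h : k % 4 < 2 ↔ l % 4 < 2) : covR p r 1 k 2 l := by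
  apply covR_of p r 1 k 2 l (Or.inr (Or.inl ⟨rfl, hk⟩)) (Or.inr (Or.inr ⟨rfl, by omega⟩))
  simp only [slotR]
  split_ifs <;> first | decide | (exfalso; omega)

lemma covUV_v (p r k l : ℕ) (hr : r < p) (hk : k < 4 * p) (hl : l < 4 * p)
    (h1 : k / 4 ≠ r) (h2 : l / 4 = r) (h : k % 4 < 2 ↔ ¬ l % 4 < 2) : covR p r 1 k 2 l := by
  apply covR_of p r 1 k 2 l (Or.inr (Or.inl ⟨rfl, by omega⟩)) (Or.inr (Or.inr ⟨rfl, by omega⟩))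
  simp only [slotR]
  split_ifs <;> first | decide | (exfalso; omega)

lemma covUV_x (p r k l : ℕ) (hr : r < p) (hk : k < 4 * p + 2) (hk' : 4 * p ≤ k)
    (hl : l < 4 * p) (h2 : l / 4 = r) (h : k = 4 * p ↔ ¬ l % 4 < 2) : covR p r 1 k 2 l := by
  apply covR_of p r 1 k 2 l (Or.inr (Or.inl ⟨rfl, by omega⟩)) (Or.inr (Or.inr ⟨rfl, by omega⟩))
  simp only [slotR]
  split_ifs <;> first | decide | (exfalso; omega)

lemma covHU (p r k : ℕ) (hr : r < p) (hk : k < 4 * p) (h1 : k / 4 = r) (h : ¬ k % 4 < 2) :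
    covR p r 0 0 1 k := by
  apply covR_of p r 0 0 1 k (Or.inl ⟨rfl, rfl⟩) (Or.inr (Or.inl ⟨rfl, by omega⟩))
  simp only [slotR]
  split_ifs <;> first | decide | (exfalso; omega)

/-- Quantifier-free form of the last layer. -/
def QZ (p q m n : ℕ) : Prop :=
  ((m = 0 ∧ n = 4 * p + 1) ∨ (m = 4 * p + 1 ∧ n = 6 * (4 * p + 1)) ∨
  (m = 3 * (4 * p + 1) ∧ n = 6 * (4 * p + 1)) ∨ (m = 4 * p + 1 ∧ n = 3 * (4 * p + 1)) ∨
  (m = 5 * (4 * p + 1) ∧ n = 6 * (4 * p + 1)) ∨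
   (m = 0 ∧ n = 3 * (4 * p + 1)) ∨ (m = 0 ∧ n = 5 * (4 * p + 1)) ∨
  (m = 3 * (4 * p + 1) ∧ n = 5 * (4 * p + 1))) ∨
  (q < p ∧ (((m = 4 * p + 1 ∧ n = 2 * (4 * p + 1) + 4 * q + 1) ∨
    (m = 4 * p + 1 ∧ n = 2 * (4 * p + 1) + 4 * q + 4) ∨
    (m = 2 * (4 * p + 1) + 4 * q + 1 ∧ n = 2 * (4 * p + 1) + 4 * q + 2) ∨
    (m = 2 * (4 * p + 1) + 4 * q + 1 ∧ n = 2 * (4 * p + 1) + 4 * q + 3) ∨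
    (m = 2 * (4 * p + 1) + 4 * q + 3 ∧ n = 2 * (4 * p + 1) + 4 * q + 4) ∨
    (m = 4 * (4 * p + 1) + 4 * q + 1 ∧ n = 5 * (4 * p + 1)) ∨
    (m = 4 * (4 * p + 1) + 4 * q + 4 ∧ n = 5 * (4 * p + 1)) ∨
    (m = 4 * (4 * p + 1) + 4 * q + 1 ∧ n = 4 * (4 * p + 1) + 4 * q + 2) ∨
    (m = 4 * (4 * p + 1) + 4 * q + 1 ∧ n = 4 * (4 * p + 1) + 4 * q + 3) ∨
    (m = 4 * (4 * p + 1) + 4 * q + 3 ∧ n = 4 * (4 * p + 1) + 4 * q + 4)) ∨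
    (m = 2 * (4 * p + 1) + 4 * q + 1 ∧ n = 3 * (4 * p + 1)) ∨
    (m = 2 * (4 * p + 1) + 4 * q + 4 ∧ n = 3 * (4 * p + 1)) ∨
    (m = 2 * (4 * p + 1) + 4 * q + 2 ∧ n = 3 * (4 * p + 1)) ∨
    (m = 2 * (4 * p + 1) + 4 * q + 2 ∧ n = 2 * (4 * p + 1) + 4 * q + 4) ∨
    (m = 3 * (4 * p + 1) ∧ n = 4 * (4 * p + 1) + 4 * q + 1) ∨
    (m = 3 * (4 * p + 1) ∧ n = 4 * (4 * p + 1) + 4 * q + 4) ∨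
    (m = 3 * (4 * p + 1) ∧ n = 4 * (4 * p + 1) + 4 * q + 2) ∨
    (m = 4 * (4 * p + 1) + 4 * q + 2 ∧ n = 4 * (4 * p + 1) + 4 * q + 4)))

lemma RelZ_of_QZ (p q m n : ℕ) (h : QZ p q m n) : RelZ p m n := by
  unfold RelZ TopZ BotZ
  rcases h with h | ⟨hq, h⟩
  · tauto
  · rcases h with h | h
    · exact Or.inl (Or.inr (Or.inr (Or.inr (Or.inr (Or.inr ⟨q, hq, h⟩)))))
    · exact Or.inr (Or.inr (Or.inr (Or.inr ⟨q, hq, h⟩)))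

lemma covZ_of (p q c k c' k' : ℕ) (h : QZ p q (posZ p c k) (posZ p c' k') ∨
    QZ p q (posZ p c' k') (posZ p c k)) : covZ p c k c' k' :=
  h.imp (RelZ_of_QZ p q _ _) (RelZ_of_QZ p q _ _)

lemma zUV_in (p k l : ℕ) (hk : k < 4 * p) (h1 : l / 4 = k / 4)
    (h : k % 2 = 1 ↔ l % 4 < 2) : covZ p 1 k 2 l := by
  apply covZ_of p (k / 4)
  have hq : k / 4 < p := by omega
  simp only [posZ, h1]
  split_ifs <;> first | (exfalso; omega) | simp [QZ, hq]

lemma zUV_x (p k l : ℕ) (hk : k < 4 * p + 2) (hk' : 4 * p ≤ k) (hl : l < 4 * p)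
    (h : k = 4 * p ↔ l % 4 < 2) : covZ p 1 k 2 l := by
  apply covZ_of p (l / 4)
  have hq : l / 4 < p := by omega
  simp only [posZ]
  split_ifs <;> first | (exfalso; omega) | simp [QZ, hq]

lemma zUV_xy (p k l : ℕ) (hk : k < 4 * p + 2) (hk' : 4 * p ≤ k) (hl : l < 4 * p + 2)
    (hl' : 4 * p ≤ l) : covZ p 1 k 2 l := by
  apply covZ_of p 0
  simp only [posZ]
  split_ifs <;> first | (exfalso; omega) | simp [QZ]

lemma zHU (p k : ℕ) (hk : k < 4 * p + 2) (h : 4 * p ≤ k ∨ k % 4 < 2) : covZ p 0 0 1 k := by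
  apply covZ_of p (k / 4)
  simp only [posZ]
  split_ifs <;> first | (exfalso; omega) | simp [QZ]
  all_goals omega

lemma zHV (p k : ℕ) (hk : k < 4 * p + 2) : covZ p 0 0 2 k := by
  apply covZ_of p (k / 4)
  simp only [posZ]
  split_ifs <;> first | (exfalso; omega) | simp [QZ]
  all_goals omega

lemma covUV (p k l : ℕ) (hk : k < 4 * p + 2) (hl : l < 4 * p + 2) :
    (∃ r < p, covR p r 1 k 2 l) ∨ covZ p 1 k 2 l := by
  by_cases a : k < 4 * p
  · by_cases b : l < 4 * p
    · by_cases c : l / 4 = k / 4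
      · by_cases d : k % 2 = 0 ↔ l % 4 < 2
        · exact Or.inl ⟨k / 4, by omega, covUV_in p _ k l (by omega) hk hl rfl c d⟩
        · exact Or.inr (zUV_in p k l a c (by omega))
      · by_cases d : k % 4 < 2 ↔ l % 4 < 2
        · exact Or.inl ⟨k / 4, by omega, covUV_u p _ k l (by omega) hk b rfl c d⟩
        · exact Or.inl ⟨l / 4, by omega, covUV_v p _ k l (by omega) a b (Ne.symm c) rfl (by omega)⟩
    · exact Or.inl ⟨k / 4, by omega, covUV_y p _ k l (by omega) hk hl rfl (by omega)⟩
  · by_cases b : l < 4 * p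
    · by_cases d : k = 4 * p ↔ l % 4 < 2
      · exact Or.inr (zUV_x p k l hk (by omega) b d)
      · exact Or.inl ⟨l / 4, by omega, covUV_x p _ k l (by omega) hk (by omega) b rfl (by omega)⟩
    · exact Or.inr (zUV_xy p k l hk (by omega) hl (by omega))

lemma cov_symm (p c k c' k' : ℕ) (h : (∃ r < p, covR p r c k c' k') ∨ covZ p c k c' k') :
    (∃ r < p, covR p r c' k' c k) ∨ covZ p c' k' c k := by
  rcases h with ⟨r, hr, h⟩ | h
  · exact Or.inl ⟨r, hr, Or.symm h⟩
  · exact Or.inr (Or.symm h)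

lemma cov_all (p c k c' k' : ℕ) (h : okC p c k) (h' : okC p c' k') (hne : c ≠ c') :
    (∃ r < p, covR p r c k c' k') ∨ covZ p c k c' k' := by
  have hHU : ∀ k, k < 4 * p + 2 → (∃ r < p, covR p r 0 0 1 k) ∨ covZ p 0 0 1 k := by
    intro k hk
    by_cases a : 4 * p ≤ k ∨ k % 4 < 2
    · exact Or.inr (zHU p k hk a)
    · exact Or.inl ⟨k / 4, by omega, covHU p _ k (by omega) (by omega) rfl (by omega)⟩
  rcases h with ⟨rfl, h⟩ | ⟨rfl, h⟩ | ⟨rfl, h⟩ <;> rcases h' with ⟨rfl, h'⟩ | ⟨rfl, h'⟩ | ⟨rfl, h'⟩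
  · exact absurd rfl hne
  · subst h; exact hHU _ h'
  · subst h; exact Or.inr (zHV p _ h')
  · subst h'; exact cov_symm _ _ _ _ _ (hHU _ h)
  · exact absurd rfl hne
  · exact covUV p _ _ h h'
  · subst h'; exact cov_symm _ _ _ _ _ (Or.inr (zHV p _ h))
  · exact cov_symm _ _ _ _ _ (covUV p _ _ h' h)
  · exact absurd rfl hne

/-- Numerical code of a vertex. -/
def codeV (p : ℕ) : (Σ i, ![Fin 1, Fin (4 * p + 2), Fin (4 * p + 2)] i) → ℕ × ℕ
  | ⟨0, k⟩ => (0, Fin.val (n := 1) k)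
  | ⟨1, k⟩ => (1, Fin.val (n := 4 * p + 2) k)
  | ⟨2, k⟩ => (2, Fin.val (n := 4 * p + 2) k)

lemma codeV_fst (p : ℕ) (v : Σ i, ![Fin 1, Fin (4 * p + 2), Fin (4 * p + 2)] i) :
    (codeV p v).1 = v.1.val := by
  obtain ⟨i, k⟩ := v
  fin_cases i <;> rfl

lemma codeV_ok (p : ℕ) (v : Σ i, ![Fin 1, Fin (4 * p + 2), Fin (4 * p + 2)] i) :
    okC p (codeV p v).1 (codeV p v).2 := by
  obtain ⟨i, k⟩ := v
  fin_cases i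
  · exact Or.inl ⟨rfl, Nat.lt_one_iff.1 (Fin.isLt (n := 1) k)⟩
  · exact Or.inr (Or.inl ⟨rfl, Fin.isLt (n := 4 * p + 2) k⟩)
  · exact Or.inr (Or.inr ⟨rfl, Fin.isLt (n := 4 * p + 2) k⟩)

lemma codeV_inj (p : ℕ) (v w : Σ i, ![Fin 1, Fin (4 * p + 2), Fin (4 * p + 2)] i)
    (h1 : (codeV p v).1 = (codeV p w).1) (h2 : (codeV p v).2 = (codeV p w).2) : v = w := by
  have e : v.1 = w.1 := Fin.ext (by rw [← codeV_fst, ← codeV_fst, h1])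
  obtain ⟨i, k⟩ := v
  obtain ⟨j, l⟩ := w
  obtain rfl : i = j := e
  congr 1
  fin_cases i
  · exact Fin.ext (n := 1) h2
  · exact Fin.ext (n := 4 * p + 2) h2
  · exact Fin.ext (n := 4 * p + 2) h2

lemma main_decomp (p : ℕ) :
    ∃ H : Fin (p + 1) → SimpleGraph (Σ i, ![Fin 1, Fin (4 * p + 2), Fin (4 * p + 2)] i),
      (∀ i, H i ≤ completeMultipartiteGraph ![Fin 1, Fin (4 * p + 2), Fin (4 * p + 2)]) ∧
      (∀ i, IsPlanar (H i)) ∧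
      (⨆ i, H i) = completeMultipartiteGraph ![Fin 1, Fin (4 * p + 2), Fin (4 * p + 2)] := by
  set K := completeMultipartiteGraph ![Fin 1, Fin (4 * p + 2), Fin (4 * p + 2)] with hK
  let GR : ℕ → SimpleGraph (Σ i, ![Fin 1, Fin (4 * p + 2), Fin (4 * p + 2)] i) := fun r =>
    relGraph K (fun v => posR p r (codeV p v).1 (codeV p v).2) (RelR p)
  let GZ : SimpleGraph (Σ i, ![Fin 1, Fin (4 * p + 2), Fin (4 * p + 2)] i) :=
    relGraph K (fun v => posZ p (codeV p v).1 (codeV p v).2) (RelZ p)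
  have hR : ∀ r, GR r ≤ K := fun r a b h => h.1
  have hZ : GZ ≤ K := fun a b h => h.1
  have pR : ∀ r, IsPlanar (GR r) := by
    intro r
    refine relGraph_planar K _ ?_ (relL (4 * p + 3) topL) (relL (4 * p + 3) botL)
      (relL_noncross _ _ (by decide)) (relL_noncross _ _ (by decide)) ?_
    · intro v w h
      obtain ⟨h1, h2⟩ := posR_inj p r _ _ _ _ (codeV_ok p v) (codeV_ok p w) h
      exact codeV_inj p v w h1 h2
    · rintro a b (h | h)
      · exact relL_lt _ (by omega) topL (by decide) a b h
      · exact relL_lt _ (by omega) botL (by decide) a b h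
  have pZ : IsPlanar GZ := by
    refine relGraph_planar K _ ?_ (TopZ p) (BotZ p) (TopZ_noncross p) (BotZ_noncross p) (Z_lt p)
    intro v w h
    obtain ⟨h1, h2⟩ := posZ_inj p _ _ _ _ (codeV_ok p v) (codeV_ok p w) h
    exact codeV_inj p v w h1 h2
  refine ⟨fun i => if i.val < p then GR i.val else GZ, ?_, ?_, ?_⟩
  · intro i
    by_cases h : i.val < p <;> simp only [h, if_true, if_false]
    · exact hR _
    · exact hZ
  · intro i
    by_cases h : i.val < p <;> simp only [h, if_true, if_false]
    · exact pR _
    · exact pZ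
  · apply le_antisymm
    · apply iSup_le
      intro i
      by_cases h : i.val < p <;> simp only [h, if_true, if_false]
      · exact hR _
      · exact hZ
    · intro a b hab
      rw [SimpleGraph.iSup_adj]
      have hne : (codeV p a).1 ≠ (codeV p b).1 := by
        rw [codeV_fst, codeV_fst]
        intro h
        exact hab (Fin.ext h)
      rcases cov_all p _ _ _ _ (codeV_ok p a) (codeV_ok p b) hne with ⟨r, hr, h⟩ | h
      · refine ⟨⟨r, by omega⟩, ?_⟩
        simp only [hr, if_true]
        exact ⟨hab, h⟩
      · refine ⟨⟨p, by omega⟩, ?_⟩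
        simp only [lt_irrefl, if_false]
        exact ⟨hab, h⟩


theorem planar_decomposition_K1_4p2 (p : ℕ) :
    (∃ H : Fin (p + 1) → SimpleGraph (Σ i, ![Fin 1, Fin (4 * p + 2), Fin (4 * p + 2)] i),
      (∀ i, H i ≤ completeMultipartiteGraph ![Fin 1, Fin (4 * p + 2), Fin (4 * p + 2)]) ∧
      (∀ i, IsPlanar (H i)) ∧
      (⨆ i, H i) = completeMultipartiteGraph ![Fin 1, Fin (4 * p + 2), Fin (4 * p + 2)]) ∧
    thickness (completeMultipartiteGraph ![Fin 1, Fin (4 * p + 2), Fin (4 * p + 2)]) ≤ p + 1 := by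
  exact ⟨main_decomp p, Nat.sInf_le (main_decomp p)⟩
end
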